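/- arXiv:0710.2454 — 7 statements merged into one kernel-verified Lean document; each statement's English description precedes it below -/
import Mathlib

section
/- For every integer n ≥ 1 and every finite number of variables, the following identity of symmetric polynomials over ℚ holds: Σ_{(i,j,k)∈ℕ³, i+j+k=n} i²·e_i·e_j·e_k = Σ_{μ ⊢ n} (−1)^{n−ℓ(μ)} · 3^{ℓ(μ)−2} · (n² + 2·p_2(μ)) · z_μ^{−1} · p_μ, where the right-hand sum is over all partitions μ of n. -/
/-!
Let `E = ∑ e_k t^k` and let `θ = t d/dt`. Newton's identities say `θE = L E` with
`L = ∑_{k ≥ 1} (-1)^{k+1} p_k t^k` (`eulerOp_esymmSeries`). The left-hand side of the theorem is the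
coefficient of `t^n` in `(θ²E) E²`, and since `θ` is a derivation,
`9 (θ²E) E² = θ²(E³) + 6 (θL) E³` (`eulerOp_cube_identity`).

It remains to expand `E³` and `(θL) E³` in power sums. For a sequence `a` with `a 0 = 0`, the
coefficients of `exp (∑ a_k t^k)` are `w_n = ∑_{μ ⊢ n} W(μ)`, where
`W(μ) = ∏_j a_{μ_j} / ∏_i m_i(μ)!`. Removing a part `k` from `μ` gives, for every weight `g`,
`∑_{μ ⊢ n} (∑_j g(μ_j)) W(μ) = ∑_{k + m = n} g(k) a_k w_m` (`sum_partition_sum_smul_expTerm`).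
With `g(k) = k` this is a recursion determining `w`; the coefficients of `E³` satisfy it for
`a_k = 3 (-1)^{k+1} p_k / k`, so they equal `w` (`coeff_esymmSeries_cube`). With `g(k) = k²` it
identifies `∑_μ p_2(μ) W(μ)` with the coefficient of `3 (θL) E³`. As
`W(μ) = (-1)^{n-ℓ(μ)} 3^{ℓ(μ)} z_μ⁻¹ p_μ` (`expTerm_scaledPsum`), the theorem follows.
-/

open MvPolynomial Finset

/-! ### Partition sums as coefficients of an exponential -/


/-- The product `∏ i, mᵢ!` of the factorials of the multiplicities of a multiset. -/
def multFact (s : Multiset ℕ) : ℚ := ∏ i ∈ s.toFinset, ((s.count i).factorial : ℚ)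

lemma multFact_ne_zero (s : Multiset ℕ) : multFact s ≠ 0 :=
  Finset.prod_ne_zero_iff.2 fun _ _ => Nat.cast_ne_zero.2 (Nat.factorial_ne_zero _)

lemma multFact_cons (k : ℕ) (s : Multiset ℕ) :
    multFact (k ::ₘ s) = ((k ::ₘ s).count k : ℚ) * multFact s := by
  have h : multFact s = ∏ i ∈ insert k s.toFinset, ((s.count i).factorial : ℚ) := by
    refine Finset.prod_subset (Finset.subset_insert _ _) fun i _ hi => ?_
    rw [Multiset.mem_toFinset] at hi
    simp [Multiset.count_eq_zero_of_notMem hi]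
  rw [h, multFact, Multiset.toFinset_cons,
    ← Finset.mul_prod_erase _ _ (Finset.mem_insert_self k s.toFinset),
    ← Finset.mul_prod_erase _ _ (Finset.mem_insert_self k s.toFinset), ← mul_assoc]
  congr 1
  · rw [Multiset.count_cons_self, Nat.factorial_succ]
    push_cast
    rfl
  · refine Finset.prod_congr rfl fun i hi => ?_
    rw [Multiset.count_cons_of_ne (Finset.ne_of_mem_erase hi)]

section

variable {A : Type*} [CommRing A] [Algebra ℚ A]

/-- The contribution `∏_{j ∈ s} a j / ∏ i, mᵢ!` of the multiset `s` of exponents to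
`exp (∑ a_k t^k)`. -/
noncomputable def expTerm (a : ℕ → A) (s : Multiset ℕ) : A := (multFact s)⁻¹ • (s.map a).prod

lemma count_smul_expTerm_cons (a : ℕ → A) (k : ℕ) (s : Multiset ℕ) :
    ((k ::ₘ s).count k : ℚ) • expTerm a (k ::ₘ s) = a k * expTerm a s := by
  have h : ((k ::ₘ s).count k : ℚ) ≠ 0 := by simp; positivity
  rw [expTerm, expTerm, multFact_cons, smul_smul, mul_inv, mul_inv_cancel_left₀ h,
    Multiset.map_cons, Multiset.prod_cons, mul_smul_comm]

/-- The coefficient of `t^n` in `exp (∑_{k ≥ 1} a_k t^k)`, written as a sum over partitions. -/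
noncomputable def expCoeff (a : ℕ → A) (n : ℕ) : A := ∑ μ : n.Partition, expTerm a μ.parts

lemma expCoeff_zero (a : ℕ → A) : expCoeff a 0 = 1 := by
  simp [expCoeff, expTerm, multFact]

/-- Weighting each partition by the sum of `g` over its parts amounts to marking one part `k` and
removing it; the multiplicity of `k` absorbs the change in `multFact`. -/
lemma sum_partition_sum_smul_expTerm (a : ℕ → A) (ha : a 0 = 0) (g : ℕ → ℚ) (n : ℕ) :
    ∑ μ : n.Partition, (μ.parts.map g).sum • expTerm a μ.parts =
      ∑ x ∈ antidiagonal n, (g x.1 • a x.1) * expCoeff a x.2 := by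
  have hL : ∀ μ : n.Partition, (μ.parts.map g).sum • expTerm a μ.parts =
      ∑ k ∈ μ.parts.toFinset, (g k * (μ.parts.count k : ℚ)) • expTerm a μ.parts := by
    intro μ
    rw [Finset.sum_multiset_map_count, Finset.sum_smul]
    exact Finset.sum_congr rfl fun k _ => by rw [nsmul_eq_mul, mul_comm]
  have hR : ∑ x ∈ antidiagonal n, (g x.1 • a x.1) * expCoeff a x.2 =
      ∑ x ∈ antidiagonal n with x.1 ≠ 0, (g x.1 • a x.1) * expCoeff a x.2 := by
    rw [Finset.sum_filter]
    refine Finset.sum_congr rfl fun x _ => ?_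
    split_ifs with h
    · rfl
    · rw [not_not.1 h, ha]; simp
  rw [hR]
  simp only [hL, expCoeff, Finset.mul_sum]
  rw [Finset.sum_sigma', Finset.sum_sigma']
  symm
  -- The pair `((k, m), ν)` with `k + m = n` and `ν ⊢ m` corresponds to `k ::ₘ ν` with `k` marked.
  refine Finset.sum_bij (fun y hy => ⟨⟨y.1.1 ::ₘ y.2.parts, ?_, ?_⟩, y.1.1⟩) ?_ ?_ ?_ ?_
  · intro i hi
    simp only [mem_sigma, mem_filter] at hy
    rcases Multiset.mem_cons.1 hi with rfl | hi
    · exact Nat.pos_of_ne_zero hy.1.2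
    · exact y.2.parts_pos hi
  · simp only [mem_sigma, mem_filter, HasAntidiagonal.mem_antidiagonal] at hy
    rw [Multiset.sum_cons, y.2.parts_sum, hy.1.1]
  · intro y hy
    simp
  · rintro ⟨⟨k, m⟩, ν⟩ hy ⟨⟨k', m'⟩, ν'⟩ hy' h
    have hk : k = k' := congrArg (fun z => z.2) h
    have hp : k ::ₘ ν.parts = k' ::ₘ ν'.parts := congrArg (fun z => z.1.parts) h
    subst hk
    have hν : ν.parts = ν'.parts := (Multiset.cons_inj_right k).1 hp
    have hm : m = m' := ν.parts_sum.symm.trans ((congrArg Multiset.sum hν).trans ν'.parts_sum)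
    subst hm
    rw [Nat.Partition.ext hν]
  · rintro ⟨μ, k⟩ hy
    have hk : k ∈ μ.parts := by simpa using hy
    have hc := Multiset.cons_erase hk
    have hs : k + (μ.parts.erase k).sum = n := by
      rw [← Multiset.sum_cons, hc, μ.parts_sum]
    refine ⟨⟨(k, (μ.parts.erase k).sum), ⟨μ.parts.erase k,
      fun hi => μ.parts_pos (Multiset.mem_of_mem_erase hi), rfl⟩⟩, ?_, ?_⟩
    · simpa [hs] using (μ.parts_pos hk).ne'
    · have : (⟨k ::ₘ μ.parts.erase k, by
          rw [hc]; exact μ.parts_pos, by rw [hc]; exact μ.parts_sum⟩ : n.Partition) = μ :=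
        Nat.Partition.ext hc
      exact congrArg (fun z : n.Partition => (⟨z, k⟩ : Σ _ : n.Partition, ℕ)) this
  · rintro ⟨⟨k, m⟩, ν⟩ hy
    simp only
    rw [mul_smul, count_smul_expTerm_cons, smul_mul_assoc]

lemma expCoeff_rec (a : ℕ → A) (ha : a 0 = 0) (n : ℕ) :
    (n : ℚ) • expCoeff a n = ∑ x ∈ antidiagonal n, ((x.1 : ℚ) • a x.1) * expCoeff a x.2 := by
  rw [← sum_partition_sum_smul_expTerm a ha (fun k => (k : ℚ)), expCoeff, Finset.smul_sum]
  refine Finset.sum_congr rfl fun μ _ => ?_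
  congr 1
  conv_lhs => rw [← μ.parts_sum]
  exact map_multiset_sum (Nat.castRingHom ℚ) _

/-- The recursion of `expCoeff_rec`, that is `θ f = (θ ∑ a_k t^k) f`, determines the sequence. -/
lemma eq_expCoeff_of_rec (a : ℕ → A) (ha : a 0 = 0) (f : ℕ → A) (h0 : f 0 = 1)
    (hf : ∀ n : ℕ, (n : ℚ) • f n = ∑ x ∈ antidiagonal n, ((x.1 : ℚ) • a x.1) * f x.2) (n : ℕ) :
    f n = expCoeff a n := by
  induction n using Nat.strong_induction_on with
  | _ n ih =>
    rcases Nat.eq_zero_or_pos n with rfl | hn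
    · rw [h0, expCoeff_zero]
    · have hn' : (n : ℚ) ≠ 0 := by positivity
      have : (n : ℚ) • f n = (n : ℚ) • expCoeff a n := by
        rw [hf, expCoeff_rec a ha]
        refine Finset.sum_congr rfl fun x hx => ?_
        rcases Nat.eq_zero_or_pos x.1 with h | h
        · simp [h]
        · rw [ih x.2 (by have := HasAntidiagonal.mem_antidiagonal.1 hx; omega)]
      exact (smul_right_injective A hn' : _) this

end

/-! ### The Euler operator -/

/-- The Euler operator `θ = t d/dt` on power series. -/
noncomputable def eulerOp (R : Type*) [CommRing R] : Derivation R (PowerSeries R) (PowerSeries R) :=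
  (PowerSeries.X : PowerSeries R) • PowerSeries.derivative R

lemma coeff_eulerOp {R : Type*} [CommRing R] (f : PowerSeries R) (n : ℕ) :
    PowerSeries.coeff n (eulerOp R f) = n * PowerSeries.coeff n f := by
  change PowerSeries.coeff n (PowerSeries.X * PowerSeries.derivative R f) = _
  cases n with
  | zero => simp
  | succ m =>
    rw [PowerSeries.coeff_succ_X_mul, PowerSeries.coeff_derivative]
    push_cast
    ring

lemma eulerOp_cube_identity {R : Type*} [CommRing R] {E L : PowerSeries R}
    (h : eulerOp R E = L * E) :
    9 * (eulerOp R (eulerOp R E) * (E * E)) =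
      eulerOp R (eulerOp R (E * (E * E))) + 6 * (eulerOp R L * (E * (E * E))) := by
  simp only [h, Derivation.leibniz, map_add, smul_eq_mul]
  ring

/-! ### Generating series of elementary symmetric polynomials and power sums -/

section

variable (σ : Type*) [Fintype σ]

/-- `E = ∑ e_k t^k`. -/
noncomputable def esymmSeries : PowerSeries (MvPolynomial σ ℚ) :=
  PowerSeries.mk fun k => esymm σ ℚ k

/-- `L = ∑_{k ≥ 1} (-1)^{k+1} p_k t^k`, the logarithmic derivative `θE / E`. -/
noncomputable def psumSeries : PowerSeries (MvPolynomial σ ℚ) :=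
  PowerSeries.mk fun k => if k = 0 then 0 else (-1) ^ (k + 1) * psum σ ℚ k

/-- Newton's identities in generating-function form. -/
lemma eulerOp_esymmSeries :
    eulerOp _ (esymmSeries σ) = psumSeries σ * esymmSeries σ := by
  ext1 n
  rw [coeff_eulerOp, mul_comm (psumSeries σ), PowerSeries.coeff_mul]
  simp only [esymmSeries, psumSeries, PowerSeries.coeff_mk]
  rw [mul_esymm_eq_sum, Finset.mul_sum, Finset.sum_filter]
  refine Finset.sum_congr rfl fun x hx => ?_
  have hx' := HasAntidiagonal.mem_antidiagonal.1 hx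
  by_cases h : x.2 = 0
  · rw [if_neg (by omega), if_pos h, mul_zero]
  · rw [if_pos (by omega), if_neg h, ← hx']
    have : ((-1 : MvPolynomial σ ℚ) ^ x.1) * (-1) ^ x.1 = 1 := by
      rw [← mul_pow]; simp
    linear_combination ((-1) ^ (x.2 + 1) * esymm σ ℚ x.1 * psum σ ℚ x.2) * this

/-- `a_k = 3 (-1)^{k+1} p_k / k`, the coefficients of `log E³`; division by zero gives `a_0 = 0`. -/
noncomputable def scaledPsum (k : ℕ) : MvPolynomial σ ℚ :=
  (3 * (-1) ^ (k + 1) / k : ℚ) • psum σ ℚ k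

lemma scaledPsum_zero : scaledPsum σ 0 = 0 := by simp [scaledPsum]

lemma smul_scaledPsum (k : ℕ) :
    (k : ℚ) • scaledPsum σ k = 3 * PowerSeries.coeff k (psumSeries σ) := by
  rw [scaledPsum, psumSeries, PowerSeries.coeff_mk, smul_smul]
  split_ifs with h
  · simp [h]
  · have h' : (k : ℚ) ≠ 0 := Nat.cast_ne_zero.2 h
    rw [mul_div_cancel₀ _ h', MvPolynomial.smul_eq_C_mul]
    simp only [map_mul, map_pow, map_neg, map_one, map_ofNat, mul_assoc]

lemma sq_smul_scaledPsum (k : ℕ) :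
    ((k : ℚ) ^ 2) • scaledPsum σ k = 3 * PowerSeries.coeff k (eulerOp _ (psumSeries σ)) := by
  rw [pow_two, mul_smul, smul_scaledPsum, coeff_eulerOp, MvPolynomial.smul_eq_C_mul, map_natCast]
  ring

/-- The power-sum expansion of `E³`, from `θ(E³) = 3 L E³`. -/
lemma coeff_esymmSeries_cube (n : ℕ) :
    PowerSeries.coeff n (esymmSeries σ * (esymmSeries σ * esymmSeries σ)) =
      expCoeff (scaledPsum σ) n := by
  refine eq_expCoeff_of_rec (scaledPsum σ) (scaledPsum_zero σ)
    (fun n => PowerSeries.coeff n (esymmSeries σ * (esymmSeries σ * esymmSeries σ))) ?_ ?_ n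
  · simp [esymmSeries]
  · intro n
    have h : eulerOp _ (esymmSeries σ * (esymmSeries σ * esymmSeries σ)) =
        PowerSeries.C 3 * (psumSeries σ * (esymmSeries σ * (esymmSeries σ * esymmSeries σ))) := by
      simp only [Derivation.leibniz, eulerOp_esymmSeries, smul_eq_mul, map_ofNat]
      ring
    have h2 := congrArg (PowerSeries.coeff n) h
    rw [coeff_eulerOp, PowerSeries.coeff_C_mul,
      PowerSeries.coeff_mul n (psumSeries σ), Finset.mul_sum] at h2
    rw [MvPolynomial.smul_eq_C_mul, map_natCast, h2]
    exact Finset.sum_congr rfl fun x _ => by rw [smul_scaledPsum, mul_assoc]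

lemma sum_antidiagonalTuple_eq_coeff (n : ℕ) :
    ∑ v ∈ Finset.Nat.antidiagonalTuple 3 n,
        ((v 0 : ℚ) ^ 2) • (esymm σ ℚ (v 0) * esymm σ ℚ (v 1) * esymm σ ℚ (v 2)) =
      PowerSeries.coeff n (eulerOp _ (eulerOp _ (esymmSeries σ)) *
        (esymmSeries σ * esymmSeries σ)) := by
  simp only [PowerSeries.coeff_mul, coeff_eulerOp, Finset.mul_sum]
  rw [Finset.sum_sigma']
  refine Finset.sum_bij' (fun v _ => ⟨(v 0, v 1 + v 2), (v 1, v 2)⟩)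
    (fun y _ => ![y.1.1, y.2.1, y.2.2]) ?_ ?_ ?_ ?_ ?_
  · intro v hv
    simpa [Finset.Nat.mem_antidiagonalTuple, Fin.sum_univ_three, add_assoc] using hv
  · rintro ⟨⟨i, m⟩, ⟨j, k⟩⟩ hy
    simp only [mem_sigma, HasAntidiagonal.mem_antidiagonal] at hy
    simp [Finset.Nat.mem_antidiagonalTuple, Fin.sum_univ_three]
    omega
  · intro v _
    ext i
    fin_cases i <;> rfl
  · rintro ⟨⟨i, m⟩, ⟨j, k⟩⟩ hy
    simp only [mem_sigma, HasAntidiagonal.mem_antidiagonal] at hy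
    obtain ⟨-, rfl⟩ := hy
    rfl
  · intro v _
    simp only [esymmSeries, PowerSeries.coeff_mk, MvPolynomial.smul_eq_C_mul, map_pow, map_natCast]
    ring

/-- The summand of the expansion of `E³` is `(-1)^{n-ℓ(μ)} 3^{ℓ(μ)} z_μ⁻¹ p_μ`. -/
lemma expTerm_scaledPsum {n : ℕ} (μ : n.Partition) :
    expTerm (scaledPsum σ) μ.parts =
      ((-1 : ℚ) ^ (n - μ.parts.card) * (3 : ℚ) ^ μ.parts.card *
        (((μ.parts.prod : ℕ) : ℚ) * multFact μ.parts)⁻¹) • psumPart σ ℚ μ := by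
  have key : ∀ s : Multiset ℕ, (s.map (scaledPsum σ)).prod =
      ((-1 : ℚ) ^ (s.sum + s.card) * 3 ^ s.card * ((s.prod : ℕ) : ℚ)⁻¹) •
        (s.map (psum σ ℚ)).prod := by
    intro s
    induction s using Multiset.induction_on with
    | empty => simp
    | cons k s ih =>
      simp only [Multiset.map_cons, Multiset.prod_cons, Multiset.sum_cons, Multiset.card_cons, ih,
        scaledPsum, smul_mul_smul_comm]
      congr 1
      push_cast
      rw [mul_inv]
      ring
  have hle : μ.parts.card ≤ n := by
    conv_rhs => rw [← μ.parts_sum]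
    simpa using Multiset.card_nsmul_le_sum (s := μ.parts) (a := 1) fun x hx => μ.parts_pos hx
  have hs : (-1 : ℚ) ^ (n + μ.parts.card) = (-1) ^ (n - μ.parts.card) := by
    rw [show n + μ.parts.card = (n - μ.parts.card) + 2 * μ.parts.card by omega, pow_add, pow_mul]
    simp
  rw [expTerm, key, μ.parts_sum, hs, smul_smul, psumPart, mul_inv]
  congr 1
  ring

end

/-- **Lemma 1, second identity.** For `n ≥ 1`, in any finite number of variables,
`∑_{i+j+k=n} i² e_i e_j e_k
  = ∑_{μ ⊢ n} (-1)^{n-ℓ(μ)} 3^{ℓ(μ)-2} (n² + 2 p_2(μ)) z_μ⁻¹ p_μ` over `ℚ`. -/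
theorem sum_sq_esymm_triple_eq_sum_powersum (n : ℕ) (hn : 1 ≤ n)
    (σ : Type*) [Fintype σ] [DecidableEq σ] :
    ∑ v ∈ Finset.Nat.antidiagonalTuple 3 n,
        ((v 0 : ℚ) ^ 2) • (esymm σ ℚ (v 0) * esymm σ ℚ (v 1) * esymm σ ℚ (v 2)) =
    ∑ μ : n.Partition,
      ((-1 : ℚ) ^ (n - μ.parts.card) * (3 : ℚ) ^ ((μ.parts.card : ℤ) - 2) *
        ((n : ℚ) ^ 2 + 2 * ((μ.parts.map (· ^ 2)).sum : ℕ)) *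
        (((μ.parts.prod : ℕ) : ℚ) *
          ∏ i ∈ μ.parts.toFinset, ((μ.parts.count i).factorial : ℚ))⁻¹) •
        psumPart σ ℚ μ := by
  have hterm : ∀ μ : n.Partition,
      ((-1 : ℚ) ^ (n - μ.parts.card) * (3 : ℚ) ^ ((μ.parts.card : ℤ) - 2) *
        ((n : ℚ) ^ 2 + 2 * ((μ.parts.map (· ^ 2)).sum : ℕ)) *
        (((μ.parts.prod : ℕ) : ℚ) *
          ∏ i ∈ μ.parts.toFinset, ((μ.parts.count i).factorial : ℚ))⁻¹) • psumPart σ ℚ μ =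
      (1 / 9 : ℚ) • ((n : ℚ) ^ 2 • expTerm (scaledPsum σ) μ.parts +
        (2 : ℚ) • ((μ.parts.map fun k : ℕ => (k : ℚ) ^ 2).sum • expTerm (scaledPsum σ) μ.parts)) := by
    intro μ
    have hc : (((μ.parts.map (· ^ 2)).sum : ℕ) : ℚ) = (μ.parts.map fun k : ℕ => (k : ℚ) ^ 2).sum := by
      rw [← Nat.coe_castRingHom, map_multiset_sum, Multiset.map_map]
      simp
    rw [expTerm_scaledPsum, hc, zpow_sub₀ (by norm_num), zpow_natCast, multFact]
    simp only [smul_smul, ← add_smul]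
    congr 1
    norm_num
    ring
  rw [Finset.sum_congr rfl fun μ _ => hterm μ, ← Finset.smul_sum, Finset.sum_add_distrib,
    ← Finset.smul_sum, ← Finset.smul_sum,
    sum_partition_sum_smul_expTerm _ (scaledPsum_zero σ) (fun k : ℕ => (k : ℚ) ^ 2)]
  rw [sum_antidiagonalTuple_eq_coeff]
  change _ = (1 / 9 : ℚ) • ((n : ℚ) ^ 2 • expCoeff (scaledPsum σ) n + _)
  simp only [sq_smul_scaledPsum, ← coeff_esymmSeries_cube, mul_assoc]
  rw [← Finset.mul_sum, ← PowerSeries.coeff_mul]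
  have h := congrArg (PowerSeries.coeff n) (eulerOp_cube_identity (eulerOp_esymmSeries σ))
  rw [← map_ofNat (PowerSeries.C (R := MvPolynomial σ ℚ)) 9,
    ← map_ofNat (PowerSeries.C (R := MvPolynomial σ ℚ)) 6, map_add, PowerSeries.coeff_C_mul,
    PowerSeries.coeff_C_mul, coeff_eulerOp, coeff_eulerOp] at h
  rw [← smul_right_injective _ (show (9 : ℚ) ≠ 0 by norm_num) |>.eq_iff, smul_smul]
  simp only [MvPolynomial.smul_eq_C_mul, map_ofNat, map_pow, map_natCast]
  norm_num
  linear_combination h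
end

section
/- For every integer n ≥ 1 and every finite number of variables, the following identity of symmetric polynomials over ℚ holds: Σ_{(i,j,k)∈ℕ³, i+j+k=n} e_i·e_j·e_k = (1/2) · Σ_{μ ⊢ n} (−1)^{n−ℓ(μ)} · ((ℓ(μ)+2)! / Π_i m_i(μ)!) · h_μ, where the right-hand sum is over all partitions μ of n. -/
/-!
Let `E(t) = ∑ e_i t^i` and `A(t) = ∑ (-1)^i h_i t^i`, as power series over the polynomial ring.
Since `E(t) = ∏ (1 + x_i t)` and `A(t) = ∏ (1 + x_i t)⁻¹`, one has `E A = 1`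
(`mk_esymm_mul_mk_hsymm`). The left-hand side of the theorem is the coefficient of `t^n` in
`E^3 = A^{-3}`. Writing `A = 1 + U` and expanding the negative binomial series,
`A^{-3} = ∑_m (-1)^m ((m+1)(m+2)/2) U^m`, and by the multinomial theorem the coefficient of `t^n`
in `U^m` is the sum over partitions `μ` of `n` with `m` parts of
`(m! / ∏ m_i(μ)!) (-1)^n h_μ` (`coeff_sum_monomial_pow`). Since
`(m+1)(m+2)/2 * m! = (m+2)!/2`, this gives the identity.

Infinite sums are avoided by computing modulo `t^(n+1)`: `U` is replaced by the finite sum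
`P = ∑_{1 ≤ i ≤ n} (-1)^i h_i t^i`, and the binomial series by its truncation, whose product with
`(1 + P)^3` differs from `1` by a multiple of `P^(n+1)` (`sum_mul_one_add_cube`).
-/

open MvPolynomial Finset

theorem mk_esymm_eq_prod (σ : Type*) [Fintype σ] [DecidableEq σ] :
    PowerSeries.mk (esymm σ ℚ) =
      ∏ i : σ, (1 + PowerSeries.monomial 1 (X i : MvPolynomial σ ℚ)) := by
  have hmono : ∀ t : Finset σ, ∏ i ∈ t, PowerSeries.monomial 1 (X i : MvPolynomial σ ℚ) =
      PowerSeries.monomial t.card (∏ i ∈ t, X i) := by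
    intro t
    induction t using Finset.induction_on with
    | empty => simp
    | insert a s ha ih =>
      rw [prod_insert ha, prod_insert ha, ih, card_insert_of_notMem ha,
        PowerSeries.monomial_mul_monomial, add_comm]
  ext1 n
  rw [prod_one_add, map_sum, PowerSeries.coeff_mk, esymm, powersetCard_eq_filter, sum_filter]
  refine sum_congr rfl fun t _ => ?_
  rw [hmono, PowerSeries.coeff_monomial]
  simp only [eq_comm]

/-- The generating function of the signed complete homogeneous polynomials, each factor being the
geometric series of `(1 + x_i t)⁻¹`; monomials of degree `n` are matched with exponent vectors. -/
theorem mk_hsymm_eq_prod (σ : Type*) [Fintype σ] [DecidableEq σ] :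
    PowerSeries.mk (fun n => (-1) ^ n * hsymm σ ℚ n) =
      ∏ i : σ, PowerSeries.mk (fun k => (-X i : MvPolynomial σ ℚ) ^ k) := by
  ext1 n
  rw [PowerSeries.coeff_prod, PowerSeries.coeff_mk, hsymm, mul_sum]
  refine sum_bij (fun s _ => Multiset.toFinsupp s.1) ?_ ?_ ?_ ?_
  · intro s _
    rw [mem_finsuppAntidiag]
    refine ⟨?_, subset_univ _⟩
    change ∑ i, s.1.count i = n
    rw [Multiset.sum_count_eq_card (fun _ _ => mem_univ _)]
    exact s.2
  · intro s _ t _ h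
    exact Subtype.ext (Multiset.toFinsupp.injective h)
  · intro l hl
    rw [mem_finsuppAntidiag] at hl
    refine ⟨⟨Finsupp.toMultiset l, ?_⟩, mem_univ _, Finsupp.toMultiset_toFinsupp l⟩
    rw [Finsupp.card_toMultiset, Finsupp.sum_fintype _ _ (fun _ => rfl)]
    exact hl.1
  · intro s _
    simp only [PowerSeries.coeff_mk, Multiset.toFinsupp_apply]
    rw [prod_multiset_map_count, prod_subset (subset_univ s.1.toFinset)]
    · simp_rw [neg_pow (X _ : MvPolynomial σ ℚ)]
      rw [prod_mul_distrib, prod_pow_eq_pow_sum,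
        Multiset.sum_count_eq_card (fun _ _ => mem_univ _), s.2]
    · intro i _ hi
      rw [Multiset.mem_toFinset] at hi
      rw [Multiset.count_eq_zero_of_notMem hi, pow_zero]

theorem one_add_monomial_mul_mk {R : Type*} [CommRing R] (x : R) :
    (1 + PowerSeries.monomial 1 x) * PowerSeries.mk (fun k => (-x) ^ k) = 1 := by
  have hx : PowerSeries.monomial 1 x = PowerSeries.C x * PowerSeries.X := by
    ext n
    simp [PowerSeries.coeff_monomial, PowerSeries.coeff_X]
  ext n
  cases n with
  | zero => simp [hx]
  | succ n =>
    rw [hx, add_mul, one_mul, mul_assoc, map_add, PowerSeries.coeff_C_mul,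
      PowerSeries.coeff_succ_X_mul, PowerSeries.coeff_mk, PowerSeries.coeff_mk,
      PowerSeries.coeff_one, if_neg n.succ_ne_zero]
    ring

theorem mk_esymm_mul_mk_hsymm (σ : Type*) [Fintype σ] [DecidableEq σ] :
    PowerSeries.mk (esymm σ ℚ) * PowerSeries.mk (fun n => (-1) ^ n * hsymm σ ℚ n) = 1 := by
  rw [mk_esymm_eq_prod, mk_hsymm_eq_prod, ← prod_mul_distrib]
  exact prod_eq_one fun i _ => one_add_monomial_mul_mk _

theorem coeff_cube {R : Type*} [CommRing R] (a : ℕ → R) (n : ℕ) :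
    PowerSeries.coeff n (PowerSeries.mk a ^ 3) =
      ∑ v ∈ Finset.Nat.antidiagonalTuple 3 n, a (v 0) * a (v 1) * a (v 2) := by
  have h : PowerSeries.mk a ^ 3 = ∏ _i : Fin 3, PowerSeries.mk a := by simp
  rw [h, PowerSeries.coeff_prod]
  refine sum_bij (fun l _ => ⇑l) ?_ ?_ ?_ ?_
  · intro l hl
    rw [mem_finsuppAntidiag] at hl
    exact Finset.Nat.mem_antidiagonalTuple.2 hl.1
  · intro l _ l' _ h
    exact DFunLike.coe_injective h
  · intro v hv
    refine ⟨Finsupp.equivFunOnFinite.symm v, ?_, rfl⟩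
    rw [mem_finsuppAntidiag]
    exact ⟨Finset.Nat.mem_antidiagonalTuple.1 hv, subset_univ _⟩
  · intro l _
    simp [Fin.prod_univ_three]

/-- The multinomial theorem, with the multisets of `m` exponents in `[1, n]` of total `n`
identified with the partitions of `n` into `m` parts. -/
theorem coeff_sum_monomial_pow {R : Type*} [CommRing R] (a : ℕ → R) (n m : ℕ) :
    PowerSeries.coeff n ((∑ i ∈ Icc 1 n, PowerSeries.monomial i (a i)) ^ m) =
      ∑ μ : n.Partition with μ.parts.card = m,
        (μ.parts.countPerms : R) * (μ.parts.map a).prod := by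
  have hmono : ∀ s : Multiset ℕ, (s.map fun i => PowerSeries.monomial i (a i)).prod =
      PowerSeries.monomial s.sum (s.map a).prod := by
    intro s
    induction s using Multiset.induction_on with
    | empty => simp
    | cons i s ih => simp [ih, PowerSeries.monomial_mul_monomial]
  rw [sum_pow, map_sum]
  have hterm : ∀ k : Sym ℕ m, PowerSeries.coeff n ((k.val.countPerms : PowerSeries R) *
      (k.val.map fun i => PowerSeries.monomial i (a i)).prod) =
      if k.val.sum = n then (k.val.countPerms : R) * (k.val.map a).prod else 0 := by
    intro k
    rw [hmono, ← nsmul_eq_mul, map_nsmul, PowerSeries.coeff_monomial, nsmul_eq_mul, mul_ite,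
      mul_zero]
    simp only [eq_comm]
  simp_rw [hterm]
  rw [← sum_filter]
  symm
  refine sum_bij (fun μ hμ => ⟨μ.parts, (mem_filter.1 hμ).2⟩) ?_ ?_ ?_ ?_
  · intro μ hμ
    refine mem_filter.2 ⟨mem_sym_iff.2 fun i hi => ?_, μ.parts_sum⟩
    have hmem : i ∈ μ.parts := hi
    exact mem_Icc.2 ⟨μ.parts_pos hmem, (Multiset.le_sum_of_mem hmem).trans_eq μ.parts_sum⟩
  · intro μ _ ν _ h
    exact Nat.Partition.ext (congrArg Subtype.val h)
  · intro k hk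
    obtain ⟨hk, hsum⟩ := mem_filter.1 hk
    exact ⟨⟨k.1, fun {i} hi => (mem_Icc.1 (mem_sym_iff.1 hk i hi)).1, hsum⟩,
      mem_filter.2 ⟨mem_univ _, k.2⟩, rfl⟩
  · intro μ _
    rfl

/-- The truncated expansion of `(1 + P)^{-3}`, with the explicit error term that makes the
induction on `N` close. -/
theorem sum_mul_one_add_cube {R : Type*} [CommRing R] [Algebra ℚ R] (P : R) (N : ℕ) :
    (∑ m ∈ range N, ((-1) ^ m * ((m + 1) * (m + 2) / 2) : ℚ) • P ^ m) * (1 + P) ^ 3 =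
      1 - (-P) ^ N * (algebraMap ℚ R ((N + 1) * (N + 2) / 2) + algebraMap ℚ R (N * (N + 2)) * P +
        algebraMap ℚ R (N * (N + 1) / 2) * P ^ 2) := by
  induction N with
  | zero => simp
  | succ N ih =>
    have h2 : (algebraMap ℚ R 2⁻¹) * 2 = 1 := by
      rw [← map_ofNat (algebraMap ℚ R) 2, ← map_mul]; norm_num
    rw [sum_range_succ, add_mul, ih, Algebra.smul_def]
    simp only [div_eq_mul_inv, map_mul, map_add, map_pow, map_neg, map_one,
      map_natCast, map_ofNat, Nat.cast_add, Nat.cast_one, neg_pow P, pow_succ]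
    generalize algebraMap ℚ R 2⁻¹ = c at h2
    generalize ((-1 : R)) ^ N = s
    generalize P ^ N = t
    linear_combination s * t * (N * (N + 2) * P + (N + 1) * (N + 3) * P ^ 2) * h2

/-- If `A = ∑ a_i t^i` has constant term `1` and `E = A⁻¹`, the coefficient of `t^n` in `E^3` is
given by the binomial series of `(1 + P)^{-3}`, where `P` is `A - 1` truncated after `t^n`. -/
theorem coeff_cube_of_mul_eq_one {R : Type*} [CommRing R] [Algebra ℚ R] (E : PowerSeries R)
    (a : ℕ → R) (ha : a 0 = 1) (hE : E * PowerSeries.mk a = 1) (n : ℕ) :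
    PowerSeries.coeff n (E ^ 3) =
      ∑ m ∈ range (n + 1), ((-1) ^ m * ((m + 1) * (m + 2) / 2) : ℚ) •
        PowerSeries.coeff n ((∑ i ∈ Icc 1 n, PowerSeries.monomial i (a i)) ^ m) := by
  set P : PowerSeries R := ∑ i ∈ Icc 1 n, PowerSeries.monomial i (a i) with hP
  set S : PowerSeries R := ∑ m ∈ range (n + 1), ((-1) ^ m * ((m + 1) * (m + 2) / 2) : ℚ) • P ^ m
    with hS
  have hcoeff : ∀ k, PowerSeries.coeff k P = if k ∈ Icc 1 n then a k else 0 := by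
    intro k
    simp only [hP, map_sum, PowerSeries.coeff_monomial, sum_ite_eq]
  have hXP : (PowerSeries.X : PowerSeries R) ∣ P := by
    rw [PowerSeries.X_dvd_iff, ← PowerSeries.coeff_zero_eq_constantCoeff_apply, hcoeff]
    simp
  have h1 : (PowerSeries.X : PowerSeries R) ^ (n + 1) ∣ S * (1 + P) ^ 3 - 1 := by
    rw [hS, sum_mul_one_add_cube, sub_sub_cancel_left]
    exact (((pow_dvd_pow_of_dvd (hXP.neg_right) (n + 1))).mul_right _).neg_right
  have h2 : (PowerSeries.X : PowerSeries R) ^ (n + 1) ∣ E * (1 + P) - 1 := by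
    have hsub : E * (1 + P) - 1 = E * (1 + P - PowerSeries.mk a) := by rw [mul_sub, hE]
    rw [hsub]
    refine Dvd.dvd.mul_left (PowerSeries.X_pow_dvd_iff.2 fun k hk => ?_) _
    rw [map_sub, map_add, hcoeff, PowerSeries.coeff_mk, PowerSeries.coeff_one]
    rcases Nat.eq_zero_or_pos k with rfl | hk0
    · simp [ha]
    · rw [if_neg hk0.ne', if_pos (mem_Icc.2 ⟨hk0, Nat.lt_succ_iff.1 hk⟩)]
      ring
  -- Modulo `t^(n+1)`: `S = S (E (1 + P))^3 = E^3 (S (1 + P)^3) = E^3`.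
  have h3 : (PowerSeries.X : PowerSeries R) ^ (n + 1) ∣ E ^ 3 - S := by
    have : E ^ 3 - S = S * (((E * (1 + P)) - 1) * ((E * (1 + P)) ^ 2 + E * (1 + P) + 1)) -
        E ^ 3 * (S * (1 + P) ^ 3 - 1) := by ring
    rw [this]
    exact ((h2.mul_right _).mul_left _).sub (h1.mul_left _)
  have h4 := PowerSeries.X_pow_dvd_iff.1 h3 n (Nat.lt_succ_self n)
  rw [map_sub, sub_eq_zero] at h4
  rw [h4, hS, map_sum]
  refine sum_congr rfl fun m _ => ?_
  exact PowerSeries.coeff_smul ..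

theorem countPerms_cast (s : Multiset ℕ) :
    (s.countPerms : ℚ) = (s.card.factorial : ℚ) / ∏ i ∈ s.toFinset, ((s.count i).factorial : ℚ) := by
  rw [eq_div_iff (by positivity), mul_comm]
  have h := Nat.multinomial_spec s.toFinset fun i => s.count i
  rw [Multiset.toFinset_sum_count_eq] at h
  exact_mod_cast h

/-- **Lemma 2, first identity.** For `n ≥ 1`, in any finite number of variables,
`∑_{i+j+k=n} e_i e_j e_k
  = (1/2) ∑_{μ ⊢ n} (-1)^{n-ℓ(μ)} ((ℓ(μ)+2)! / ∏_i m_i(μ)!) h_μ` over `ℚ`. -/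
theorem sum_esymm_triple_eq_sum_hsymm (n : ℕ) (hn : 1 ≤ n)
    (σ : Type*) [Fintype σ] [DecidableEq σ] :
    ∑ v ∈ Finset.Nat.antidiagonalTuple 3 n,
        esymm σ ℚ (v 0) * esymm σ ℚ (v 1) * esymm σ ℚ (v 2) =
    (1 / 2 : ℚ) • ∑ μ : n.Partition,
      ((-1 : ℚ) ^ (n - μ.parts.card) *
        (((μ.parts.card + 2).factorial : ℚ) /
          ∏ i ∈ μ.parts.toFinset, ((μ.parts.count i).factorial : ℚ))) •
        hsymmPart σ ℚ μ := by
  rw [← coeff_cube, coeff_cube_of_mul_eq_one _ _ (by simp) (mk_esymm_mul_mk_hsymm σ)]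
  have hcard : ∀ μ : n.Partition, μ.parts.card ≤ n := by
    intro μ
    have h := Multiset.card_nsmul_le_sum (s := μ.parts) (a := 1) fun i hi => μ.parts_pos hi
    simpa [μ.parts_sum] using h
  simp_rw [coeff_sum_monomial_pow, smul_sum]
  rw [← sum_fiberwise_of_maps_to (s := univ) (t := range (n + 1))
    (g := fun μ : n.Partition => μ.parts.card) fun μ _ => mem_range.2 (Nat.lt_succ_iff.2 (hcard μ))]
  refine sum_congr rfl fun m _ => sum_congr rfl fun μ hμ => ?_
  obtain rfl := (mem_filter.1 hμ).2
  have hprod : (μ.parts.map fun i => (-1) ^ i * hsymm σ ℚ i).prod =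
      (-1 : ℚ) ^ n • hsymmPart σ ℚ μ := by
    rw [Multiset.prod_map_mul, hsymmPart, Algebra.smul_def, map_pow, map_neg, map_one]
    congr 1
    conv_rhs => rw [← μ.parts_sum]
    induction μ.parts using Multiset.induction_on with
    | empty => simp
    | cons i s ih => simp [ih, pow_add]
  have hsign : (-1 : ℚ) ^ (n - μ.parts.card) = (-1) ^ μ.parts.card * (-1) ^ n := by
    obtain ⟨d, hd⟩ := Nat.exists_eq_add_of_le (hcard μ)
    have hdiff : n - μ.parts.card = d := by omega
    rw [← pow_add, hdiff, show μ.parts.card + n = 2 * μ.parts.card + d by omega, pow_add, pow_mul]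
    simp
  rw [hprod, ← nsmul_eq_mul, ← Nat.cast_smul_eq_nsmul ℚ, smul_smul, smul_smul, smul_smul,
    countPerms_cast, hsign, Nat.factorial_succ, Nat.factorial_succ]
  congr 1
  push_cast
  ring
end

section
/- For every integer n ≥ 1 and every finite number of variables, the following identity of symmetric polynomials over ℚ holds: Σ_{(i,j,k)∈ℕ³, i+j+k=n} i²·e_i·e_j·e_k = (1/12) · Σ_{μ ⊢ n} (−1)^{n−ℓ(μ)} · ((ℓ(μ)+2)! / Π_i m_i(μ)!) · (n² + p_2(μ)) · h_μ, where the right-hand sum is over all partitions μ of n. -/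
/-!
Let `E(t) = ∑ eᵢ tⁱ` and `G(t) = H(-t) = ∑ (-1)ⁱ hᵢ tⁱ`, so that `E G = 1`, and let `D = t d/dt`.
The left-hand side of the theorem is the coefficient of `tⁿ` in `E² D²E`.

Since `(ℓ+2)! / ∏ mᵢ! = (ℓ+1)(ℓ+2) · (ℓ! / ∏ mᵢ!)`, and `ℓ! / ∏ mᵢ!` counts the orderings of the
parts of `μ`, the expansion `2 / (1 + g)³ = ∑ (-1)^ℓ (ℓ+1)(ℓ+2) g^ℓ` at `g = G - 1` shows that the
right-hand sum without the factor `n² + p₂(μ)` is the coefficient of `tⁿ` in `2 E³`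
(`sum_partition_eq_coeff_cube`). The factor `n²` turns this into `2 D²(E³)`. The factor `p₂(μ)` is
obtained by the first-order deformation `hᵢ ↦ hᵢ (1 + i² ε)`, under which `h_μ` becomes
`h_μ (1 + p₂(μ) ε)` and `2 E³` becomes `2 E³ - 6 ε E⁴ D²G` (`sum_partition_p2`).

The theorem is therefore the identity `12 E² D²E = 2 D²(E³) - 6 E⁴ D²G` (`eulerD_identity`), which
follows from differentiating `E G = 1` twice.
-/

open MvPolynomial Finset

open scoped PowerSeries in
theorem coeff_prod_fin {R : Type*} [CommRing R] (k n : ℕ) (f : Fin k → R⟦X⟧) :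
    PowerSeries.coeff n (∏ j, f j) =
      ∑ v ∈ Finset.Nat.antidiagonalTuple k n, ∏ j, PowerSeries.coeff (v j) (f j) := by
  rw [PowerSeries.coeff_prod]
  refine Finset.sum_equiv Finsupp.equivFunOnFinite ?_ ?_
  · intro l
    simp [Finset.Nat.mem_antidiagonalTuple, Finset.mem_finsuppAntidiag]
  · intro l _
    simp

open scoped PowerSeries in
/-- The generating function of the elementary symmetric polynomials is `E(t) = ∏ (1 + Xᵢ t)`. -/
theorem coeff_prod_one_add (σ : Type*) [Fintype σ] [DecidableEq σ] (n : ℕ) :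
    PowerSeries.coeff n (∏ i : σ, (1 + PowerSeries.C (MvPolynomial.X i : MvPolynomial σ ℚ) * PowerSeries.X)) =
      esymm σ ℚ n := by
  rw [Finset.prod_one_add, map_sum, esymm, Finset.powersetCard_eq_filter, Finset.sum_filter]
  refine Finset.sum_congr rfl fun t _ => ?_
  rw [Finset.prod_mul_distrib, Finset.prod_const, ← map_prod, PowerSeries.coeff_C_mul, PowerSeries.coeff_X_pow]
  simp [eq_comm]

open scoped PowerSeries in
/-- The generating function of the signed complete homogeneous symmetric polynomials
`(-1)ⁿ hₙ` is `G(t) = ∏ᵢ ∑ₖ (-Xᵢ)ᵏ tᵏ`, that is, `H(-t)`. -/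
theorem coeff_prod_geom (σ : Type*) [Fintype σ] [DecidableEq σ] (n : ℕ) :
    PowerSeries.coeff n (∏ i : σ, PowerSeries.mk fun k => (-(MvPolynomial.X i : MvPolynomial σ ℚ)) ^ k) =
      (-1) ^ n * hsymm σ ℚ n := by
  rw [PowerSeries.coeff_prod, hsymm, Finset.mul_sum]
  symm
  refine Finset.sum_bij (fun s _ => Multiset.toFinsupp s.1) ?_ ?_ ?_ ?_
  · intro s _
    rw [Finset.mem_finsuppAntidiag]
    refine ⟨?_, Finset.subset_univ _⟩
    change ∑ i, s.1.count i = n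
    rw [Multiset.sum_count_eq_card (by simp)]
    exact s.2
  · intro s _ t _ h
    exact Subtype.ext (Multiset.toFinsupp.injective h)
  · intro l hl
    rw [Finset.mem_finsuppAntidiag] at hl
    refine ⟨⟨Finsupp.toMultiset l, ?_⟩, Finset.mem_univ _, by simp⟩
    rw [Finsupp.card_toMultiset, Finsupp.sum_fintype _ _ (by simp)]
    exact hl.1
  · intro s _
    simp only [PowerSeries.coeff_mk, Multiset.toFinsupp_apply]
    rw [Finset.prod_congr rfl fun i _ => neg_pow (MvPolynomial.X i : MvPolynomial σ ℚ) _,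
      Finset.prod_mul_distrib, Finset.prod_pow_eq_pow_sum,
      Multiset.sum_count_eq_card (by simp), Finset.prod_multiset_map_count]
    congr 1
    · rw [s.2]
    · refine Finset.prod_subset (Finset.subset_univ _) fun i _ hi => ?_
      rw [Multiset.mem_toFinset] at hi
      rw [Multiset.count_eq_zero_of_notMem hi, pow_zero]

open scoped PowerSeries in
theorem prod_one_add_mul_prod_geom (σ : Type*) [Fintype σ] [DecidableEq σ] :
    (∏ i : σ, (1 + PowerSeries.C (MvPolynomial.X i : MvPolynomial σ ℚ) * PowerSeries.X)) *
      (∏ i : σ, PowerSeries.mk fun k => (-(MvPolynomial.X i : MvPolynomial σ ℚ)) ^ k) = 1 := by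
  rw [← Finset.prod_mul_distrib]
  refine Finset.prod_eq_one fun i _ => ?_
  ext1 n
  rw [add_mul, one_mul, map_add, mul_assoc, PowerSeries.coeff_C_mul]
  cases n with
  | zero => simp
  | succ n => simp [PowerSeries.coeff_succ_X_mul, PowerSeries.coeff_one, pow_succ]; ring

open scoped PowerSeries in
theorem coeff_pow_eq_of_X_pow_dvd {R : Type*} [CommRing R] {f g : R⟦X⟧} {n : ℕ}
    (h : (PowerSeries.X : R⟦X⟧) ^ (n + 1) ∣ f - g) (l : ℕ) : PowerSeries.coeff n (f ^ l) = PowerSeries.coeff n (g ^ l) := by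
  have := PowerSeries.X_pow_dvd_iff.1 (h.trans (sub_dvd_pow_sub_pow f g l)) n (Nat.lt_succ_self n)
  rwa [map_sub, sub_eq_zero] at this

open scoped PowerSeries in
/-- Multinomial theorem for a power series without constant term: the coefficient of `tⁿ` in
`(∑_{i ≥ 1} cᵢ tⁱ) ^ l` is a sum over the partitions of `n` into `l` parts. The number
`countPerms` is `l! / ∏ mᵢ!`, the number of orderings of the parts. -/
theorem coeff_pow_eq_sum_partition {R : Type*} [CommRing R] (c : ℕ → R) (h0 : c 0 = 1) (n l : ℕ) :
    PowerSeries.coeff n ((PowerSeries.mk c - 1) ^ l) =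
      ∑ μ : n.Partition with μ.parts.card = l,
        (μ.parts.countPerms : R) * (μ.parts.map c).prod := by
  -- Modulo `t ^ (n + 1)` the series is a finite sum of monomials.
  have htr : (PowerSeries.X : R⟦X⟧) ^ (n + 1) ∣
      (PowerSeries.mk c - 1) - ∑ i ∈ Finset.Icc 1 n, PowerSeries.monomial i (c i) := by
    rw [PowerSeries.X_pow_dvd_iff]
    intro m hm
    rcases Nat.eq_zero_or_pos m with rfl | hpos
    · rw [map_sub, map_sub, map_sum, PowerSeries.coeff_mk, h0, Finset.sum_eq_zero]
      · simp
      · intro i hi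
        rw [Finset.mem_Icc] at hi
        rw [PowerSeries.coeff_monomial, if_neg (by omega)]
    · rw [map_sub, map_sub, map_sum, PowerSeries.coeff_mk, PowerSeries.coeff_one, if_neg (by omega),
        Finset.sum_eq_single m]
      · simp
      · intro i _ hi
        rw [PowerSeries.coeff_monomial, if_neg (Ne.symm hi)]
      · intro h
        exact absurd (Finset.mem_Icc.2 ⟨hpos, by omega⟩) h
  rw [coeff_pow_eq_of_X_pow_dvd htr, Finset.sum_pow, map_sum]
  have hprod : ∀ s : Multiset ℕ, (s.map fun i => PowerSeries.monomial i (c i)).prod =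
      PowerSeries.monomial s.sum (s.map c).prod := by
    intro s
    induction s using Multiset.induction_on with
    | empty => simp
    | cons a s ih => simp [ih, PowerSeries.monomial_mul_monomial]
  have hterm : ∀ s : Sym ℕ l, PowerSeries.coeff n ((s.1.countPerms : R⟦X⟧) *
      (s.1.map fun i => PowerSeries.monomial i (c i)).prod) =
      if s.1.sum = n then (s.1.countPerms : R) * (s.1.map c).prod else 0 := by
    intro s
    rw [hprod, ← map_natCast (PowerSeries.C (R := R)), PowerSeries.coeff_C_mul, PowerSeries.coeff_monomial,
      mul_ite, mul_zero]
    simp only [eq_comm]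
  rw [Finset.sum_congr rfl fun s _ => hterm s, ← Finset.sum_filter]
  symm
  refine Finset.sum_bij (fun μ hμ => ⟨μ.parts, (Finset.mem_filter.1 hμ).2⟩) ?_ ?_ ?_ ?_
  · intro μ hμ
    refine Finset.mem_filter.2 ⟨Finset.mem_sym_iff.2 fun a ha => ?_, μ.parts_sum⟩
    exact Finset.mem_Icc.2 ⟨μ.parts_pos ha, Nat.Partition.le_of_mem_parts ha⟩
  · intro μ _ ν _ h
    exact Nat.Partition.ext (congrArg Subtype.val h)
  · intro s hs
    rw [Finset.mem_filter, Finset.mem_sym_iff] at hs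
    exact ⟨⟨s.1, fun {i} hi => (Finset.mem_Icc.1 (hs.1 i hi)).1, hs.2⟩,
      Finset.mem_filter.2 ⟨Finset.mem_univ _, s.2⟩, rfl⟩
  · intro μ _
    rfl

/-- Partial sums of `∑ (l + 1) (l + 2) xˡ = 2 / (1 - x)³`, with the exact remainder. -/
theorem one_sub_pow_three_mul_sum {A : Type*} [CommRing A] (x : A) (N : ℕ) :
    (1 - x) ^ 3 * ∑ l ∈ Finset.range N, ((l : A) + 1) * (l + 2) * x ^ l =
      2 - x ^ N * ((N + 1) * (N + 2) - 2 * N * (N + 2) * x + N * (N + 1) * x ^ 2) := by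
  induction N with
  | zero => simp
  | succ N ih =>
    rw [Finset.sum_range_succ, mul_add, ih]
    push_cast
    ring

open scoped PowerSeries in
/-- With `G = ∑ cᵢ tⁱ`, `c₀ = 1` and `E = 1 / G`, the expansion of `2 E³ = 2 / (1 + (G - 1))³` in
powers of `G - 1`. It is stated over an arbitrary commutative ring so that it also applies over
dual numbers. -/
theorem sum_partition_eq_coeff_cube {R : Type*} [CommRing R] (c : ℕ → R) (h0 : c 0 = 1)
    (E : R⟦X⟧) (hE : E * PowerSeries.mk c = 1) (n : ℕ) :
    ∑ μ : n.Partition, (-1 : R) ^ μ.parts.card *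
        (((μ.parts.card : R) + 1) * (μ.parts.card + 2)) *
        μ.parts.countPerms * (μ.parts.map c).prod = 2 * PowerSeries.coeff n (E ^ 3) := by
  set x : R⟦X⟧ := 1 - PowerSeries.mk c with hx
  have hdvd : (PowerSeries.X : R⟦X⟧) ∣ x := by
    rw [PowerSeries.X_dvd_iff]
    simp [hx, h0]
  have hS := one_sub_pow_three_mul_sum x (n + 1)
  set S := ∑ l ∈ Finset.range (n + 1), ((l : R⟦X⟧) + 1) * ((l : R⟦X⟧) + 2) * x ^ l with hSdef
  set r := (((n + 1 : ℕ) : R⟦X⟧) + 1) * (((n + 1 : ℕ) : R⟦X⟧) + 2) -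
    2 * ((n + 1 : ℕ) : R⟦X⟧) * (((n + 1 : ℕ) : R⟦X⟧) + 2) * x +
    ((n + 1 : ℕ) : R⟦X⟧) * (((n + 1 : ℕ) : R⟦X⟧) + 1) * x ^ 2
  have hE3 : E ^ 3 * (1 - x) ^ 3 = 1 := by
    rw [← mul_pow, hx, sub_sub_cancel, hE, one_pow]
  have hSE : S = 2 * E ^ 3 - x ^ (n + 1) * (r * E ^ 3) := by
    linear_combination (-S) * hE3 + E ^ 3 * hS
  have hz : PowerSeries.coeff n (x ^ (n + 1) * (r * E ^ 3)) = 0 :=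
    PowerSeries.X_pow_dvd_iff.1 ((pow_dvd_pow_of_dvd hdvd (n + 1)).mul_right _) n
      (Nat.lt_succ_self n)
  have h2 : PowerSeries.coeff n (2 * E ^ 3) = 2 * PowerSeries.coeff n (E ^ 3) := by
    rw [two_mul, map_add, two_mul]
  rw [← h2, ← sub_zero (PowerSeries.coeff n (2 * E ^ 3)), ← hz, ← map_sub, ← hSE, hSdef, map_sum]
  have hl : ∀ l : ℕ, PowerSeries.coeff n (((l : R⟦X⟧) + 1) * ((l : R⟦X⟧) + 2) * x ^ l) =
      ∑ μ : n.Partition with μ.parts.card = l, (-1 : R) ^ μ.parts.card *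
        (((μ.parts.card : R) + 1) * (μ.parts.card + 2)) *
        μ.parts.countPerms * (μ.parts.map c).prod := by
    intro l
    have : ((l : R⟦X⟧) + 1) * ((l : R⟦X⟧) + 2) * x ^ l =
        PowerSeries.C ((-1 : R) ^ l * (((l : R) + 1) * (l + 2))) * (PowerSeries.mk c - 1) ^ l := by
      have hneg : x = (-1) * (PowerSeries.mk c - 1) := by rw [hx]; ring
      rw [hneg, mul_pow]
      simp only [map_mul, map_pow, map_neg, map_one, map_add, map_natCast, map_ofNat]
      ring
    rw [this, PowerSeries.coeff_C_mul, coeff_pow_eq_sum_partition c h0, Finset.mul_sum]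
    refine Finset.sum_congr rfl fun μ hμ => ?_
    rw [(Finset.mem_filter.1 hμ).2]
    ring
  rw [Finset.sum_congr rfl fun l _ => hl l]
  symm
  refine Finset.sum_fiberwise_of_maps_to (fun μ _ => ?_) _
  rw [Finset.mem_range, Nat.lt_succ_iff]
  calc μ.parts.card ≤ μ.parts.sum := by
        have := Multiset.card_nsmul_le_sum (s := μ.parts) (a := 1) fun i hi => μ.parts_pos hi
        simpa using this
    _ = n := μ.parts_sum

/-- The Euler operator `D = t d/dt`, which multiplies the coefficient of `tⁿ` by `n`. -/
noncomputable def eulerD {R : Type*} [CommRing R] (f : PowerSeries R) : PowerSeries R :=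
  PowerSeries.X * PowerSeries.derivative R f

open scoped PowerSeries in
theorem coeff_eulerD {R : Type*} [CommRing R] (f : R⟦X⟧) (n : ℕ) :
    PowerSeries.coeff n (eulerD f) = n * PowerSeries.coeff n f := by
  cases n with
  | zero => simp [eulerD]
  | succ n =>
    rw [eulerD, PowerSeries.coeff_succ_X_mul, PowerSeries.coeff_derivative]
    push_cast
    ring

theorem eulerD_mul {R : Type*} [CommRing R] (f g : PowerSeries R) :
    eulerD (f * g) = eulerD f * g + f * eulerD g := by
  simp only [eulerD, Derivation.leibniz, smul_eq_mul]
  ring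

theorem eulerD_add {R : Type*} [CommRing R] (f g : PowerSeries R) :
    eulerD (f + g) = eulerD f + eulerD g := by
  simp only [eulerD, map_add, mul_add]

open scoped PowerSeries in
/-- The analogue of `sum_partition_eq_coeff_cube` with the additional weight `p₂(μ) = ∑ μⱼ²`:
it is the `ε`-part of that lemma for the deformed coefficients `cᵢ (1 + i² ε)` over the dual
numbers, whose series is `G + ε D²G` with inverse `E - ε E² D²G`, where `D = t d/dt`. -/
theorem sum_partition_p2 {R : Type*} [CommRing R] (c : ℕ → R) (h0 : c 0 = 1)
    (E : R⟦X⟧) (hE : E * PowerSeries.mk c = 1) (n : ℕ) :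
    ∑ μ : n.Partition, (-1 : R) ^ μ.parts.card *
        (((μ.parts.card : R) + 1) * (μ.parts.card + 2)) *
        μ.parts.countPerms * (((μ.parts.map (· ^ 2)).sum : ℕ) * (μ.parts.map c).prod) =
      -6 * PowerSeries.coeff n (E ^ 4 * eulerD (eulerD (PowerSeries.mk c))) := by
  set G : R⟦X⟧ := PowerSeries.mk c with hG
  let ι : R →+* DualNumber R := TrivSqZeroExt.inlHom R R
  let ε : (DualNumber R)⟦X⟧ := PowerSeries.C DualNumber.eps
  let c' : ℕ → DualNumber R := fun i => ι (c i) * (1 + DualNumber.eps * ι ((i : R) ^ 2))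
  have hε : ε * ε = 0 := by
    rw [← map_mul, DualNumber.eps_mul_eps, map_zero]
  have hG' : PowerSeries.mk c' = PowerSeries.map ι G + ε * PowerSeries.map ι (eulerD (eulerD G)) := by
    ext1 i
    simp only [ε, map_add, PowerSeries.coeff_C_mul, PowerSeries.coeff_mk, PowerSeries.coeff_map, coeff_eulerD, hG, c', map_mul,
      map_pow]
    ring
  have hιE : PowerSeries.map ι E * PowerSeries.map ι G = 1 := by
    rw [← map_mul, hE, map_one]
  have hE' : (PowerSeries.map ι E - ε * PowerSeries.map ι (E ^ 2 * eulerD (eulerD G))) *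
      PowerSeries.mk c' = 1 := by
    rw [hG', map_mul, map_pow]
    set a := PowerSeries.map ι E
    set b := PowerSeries.map ι G
    set d := PowerSeries.map ι (eulerD (eulerD G))
    linear_combination (1 - ε * a * d) * hιE - a ^ 2 * d ^ 2 * hε
  have key := sum_partition_eq_coeff_cube c' (by simp [c', h0]) _ hE' n
  -- Only the terms of order at most one in `ε` survive in the cube.
  have hcube : (PowerSeries.map ι E - ε * PowerSeries.map ι (E ^ 2 * eulerD (eulerD G))) ^ 3 =
      PowerSeries.map ι (E ^ 3) -
        ε * PowerSeries.map ι (3 * (E ^ 4 * eulerD (eulerD G))) := by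
    simp only [map_mul, map_pow, map_ofNat]
    set a := PowerSeries.map ι E
    set d := PowerSeries.map ι (eulerD (eulerD G))
    linear_combination (3 * a ^ 5 * d ^ 2 - ε * a ^ 6 * d ^ 3) * hε
  have hprod : ∀ s : Multiset ℕ, (s.map c').prod =
      ι (s.map c).prod * (1 + DualNumber.eps * ι ((s.map (· ^ 2)).sum : ℕ)) := by
    intro s
    induction s using Multiset.induction_on with
    | empty => simp
    | cons a s ih =>
      simp only [Multiset.map_cons, Multiset.prod_cons, Multiset.sum_cons, ih, c', map_mul,
        Nat.cast_add, map_add, Nat.cast_pow]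
      have := DualNumber.eps_mul_eps (R := R)
      linear_combination (ι (c a) * ι (s.map c).prod * ι ((a : R) ^ 2) *
        ι (((s.map (· ^ 2)).sum : ℕ) : R)) * this
  have h3 : PowerSeries.coeff n (3 * (E ^ 4 * eulerD (eulerD G))) = 3 * PowerSeries.coeff n (E ^ 4 * eulerD (eulerD G)) := by
    rw [← map_ofNat (PowerSeries.C (R := R)) 3, PowerSeries.coeff_C_mul]
  have hr : (2 : DualNumber R) * PowerSeries.coeff n (PowerSeries.map ι (E ^ 3) -
        ε * PowerSeries.map ι (3 * (E ^ 4 * eulerD (eulerD G)))) =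
      ι (2 * PowerSeries.coeff n (E ^ 3)) +
        DualNumber.eps * ι (-6 * PowerSeries.coeff n (E ^ 4 * eulerD (eulerD G))) := by
    rw [map_sub, PowerSeries.coeff_C_mul, PowerSeries.coeff_map, PowerSeries.coeff_map, h3]
    simp only [map_mul, map_neg, map_ofNat]
    ring
  have hsnd : ∀ a b : R, TrivSqZeroExt.snd (ι a + DualNumber.eps * ι b) = b := by
    intro a b
    simp [ι]
  rw [hcube, hr] at key
  have key2 := congrArg TrivSqZeroExt.snd key
  rw [hsnd, TrivSqZeroExt.snd_sum] at key2
  rw [← key2]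
  refine Finset.sum_congr rfl fun μ _ => ?_
  rw [hprod]
  have : (-1 : DualNumber R) ^ μ.parts.card *
        (((μ.parts.card : DualNumber R) + 1) * ((μ.parts.card : DualNumber R) + 2)) *
        (μ.parts.countPerms : DualNumber R) * (ι (μ.parts.map c).prod *
          (1 + DualNumber.eps * ι ((μ.parts.map (· ^ 2)).sum : ℕ))) =
      ι ((-1 : R) ^ μ.parts.card * (((μ.parts.card : R) + 1) * (μ.parts.card + 2)) *
        μ.parts.countPerms * (μ.parts.map c).prod) +
      DualNumber.eps * ι ((-1 : R) ^ μ.parts.card *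
        (((μ.parts.card : R) + 1) * (μ.parts.card + 2)) *
        μ.parts.countPerms * (((μ.parts.map (· ^ 2)).sum : ℕ) * (μ.parts.map c).prod)) := by
    simp only [map_mul, map_add, map_pow, map_neg, map_one, map_natCast, map_ofNat]
    ring
  rw [this, hsnd]

/-- A second-order differential identity for `E` and `G = 1 / E`, obtained by
applying `D` once and twice to `E * G = 1`. -/
theorem eulerD_identity {R : Type*} [CommRing R] (E G : PowerSeries R) (h : E * G = 1) :
    12 * (E ^ 2 * eulerD (eulerD E)) =
      2 * eulerD (eulerD (E ^ 3)) - 6 * (E ^ 4 * eulerD (eulerD G)) := by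
  have h1 : eulerD E * G + E * eulerD G = 0 := by
    rw [← eulerD_mul, h]
    simp [eulerD]
  have h2 : eulerD (eulerD E) * G + 2 * eulerD E * eulerD G + E * eulerD (eulerD G) = 0 := by
    have := congrArg eulerD h1
    rw [eulerD_add, eulerD_mul, eulerD_mul] at this
    have hz : eulerD (0 : PowerSeries R) = 0 := by simp [eulerD]
    rw [hz] at this
    linear_combination this
  have h3 : eulerD (eulerD (E ^ 3)) = 3 * E ^ 2 * eulerD (eulerD E) + 6 * E * eulerD E ^ 2 := by
    have : E ^ 3 = E * (E * E) := by ring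
    rw [this]
    simp only [eulerD_mul, eulerD_add]
    ring
  rw [h3]
  linear_combination 6 * E ^ 3 * h2 - 12 * E ^ 2 * eulerD E * h1 +
    (12 * E * eulerD E ^ 2 - 6 * E ^ 2 * eulerD (eulerD E)) * h

theorem factorial_div_prod_eq (s : Multiset ℕ) :
    ((s.card + 2).factorial : ℚ) / ∏ i ∈ s.toFinset, ((s.count i).factorial : ℚ) =
      ((s.card : ℚ) + 1) * (s.card + 2) * s.countPerms := by
  have h : (∏ i ∈ s.toFinset, ((s.count i).factorial : ℚ)) * s.countPerms = s.card.factorial := by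
    have := Nat.multinomial_spec s.toFinset fun i => s.count i
    rw [Multiset.toFinset_sum_count_eq] at this
    rw [← this]
    push_cast
    rfl
  have hne : (∏ i ∈ s.toFinset, ((s.count i).factorial : ℚ)) ≠ 0 :=
    Finset.prod_ne_zero_iff.2 fun i _ => Nat.cast_ne_zero.2 (Nat.factorial_ne_zero _)
  rw [div_eq_iff hne, Nat.factorial_succ, Nat.factorial_succ]
  push_cast
  rw [← h]
  ring

/-- **Lemma 2, second identity.** For `n ≥ 1`, in any finite number of variables,
`∑_{i+j+k=n} i² e_i e_j e_k
  = (1/12) ∑_{μ ⊢ n} (-1)^{n-ℓ(μ)} ((ℓ(μ)+2)! / ∏_i m_i(μ)!) (n² + p_2(μ)) h_μ` over `ℚ`. -/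
theorem sum_sq_esymm_triple_eq_sum_hsymm (n : ℕ) (hn : 1 ≤ n)
    (σ : Type*) [Fintype σ] [DecidableEq σ] :
    ∑ v ∈ Finset.Nat.antidiagonalTuple 3 n,
        ((v 0 : ℚ) ^ 2) • (esymm σ ℚ (v 0) * esymm σ ℚ (v 1) * esymm σ ℚ (v 2)) =
    (1 / 12 : ℚ) • ∑ μ : n.Partition,
      ((-1 : ℚ) ^ (n - μ.parts.card) *
        (((μ.parts.card + 2).factorial : ℚ) /
          ∏ i ∈ μ.parts.toFinset, ((μ.parts.count i).factorial : ℚ)) *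
        ((n : ℚ) ^ 2 + ((μ.parts.map (· ^ 2)).sum : ℕ))) •
        hsymmPart σ ℚ μ := by
  let c : ℕ → MvPolynomial σ ℚ := fun k => (-1) ^ k * hsymm σ ℚ k
  set E : PowerSeries (MvPolynomial σ ℚ) :=
    ∏ i : σ, (1 + PowerSeries.C (MvPolynomial.X i) * PowerSeries.X) with hEdef
  have hE : E * PowerSeries.mk c = 1 := by
    rw [← prod_one_add_mul_prod_geom σ]
    congr 1
    ext1 k
    rw [coeff_prod_geom, PowerSeries.coeff_mk]
  have h0 : c 0 = 1 := by simp [c]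
  have hL : ∑ v ∈ Finset.Nat.antidiagonalTuple 3 n,
      ((v 0 : ℚ) ^ 2) • (esymm σ ℚ (v 0) * esymm σ ℚ (v 1) * esymm σ ℚ (v 2)) =
      PowerSeries.coeff n (E ^ 2 * eulerD (eulerD E)) := by
    have : E ^ 2 * eulerD (eulerD E) = ∏ j, (![eulerD (eulerD E), E, E] : Fin 3 → _) j := by
      rw [Fin.prod_univ_three]
      simp only [Matrix.cons_val]
      ring
    rw [this, coeff_prod_fin]
    refine Finset.sum_congr rfl fun v _ => ?_
    rw [Fin.prod_univ_three]
    simp only [Matrix.cons_val, coeff_eulerD, hEdef, coeff_prod_one_add, Algebra.smul_def,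
      map_pow, map_natCast]
    ring
  have hA := sum_partition_eq_coeff_cube c h0 E hE n
  have hB := sum_partition_p2 c h0 E hE n
  have hI := congrArg (PowerSeries.coeff n) (eulerD_identity E _ hE)
  rw [map_sub, ← map_ofNat (PowerSeries.C (R := MvPolynomial σ ℚ)) 12,
    ← map_ofNat (PowerSeries.C (R := MvPolynomial σ ℚ)) 2,
    ← map_ofNat (PowerSeries.C (R := MvPolynomial σ ℚ)) 6, PowerSeries.coeff_C_mul,
    PowerSeries.coeff_C_mul, PowerSeries.coeff_C_mul, coeff_eulerD, coeff_eulerD] at hI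
  have hcprod : ∀ s : Multiset ℕ, (s.map c).prod = (-1) ^ s.sum * (s.map (hsymm σ ℚ)).prod := by
    intro s
    induction s using Multiset.induction_on with
    | empty => simp
    | cons a s ih => simp only [Multiset.map_cons, Multiset.prod_cons, Multiset.sum_cons, ih, c]; ring
  have hR : ∑ μ : n.Partition,
      ((-1 : ℚ) ^ (n - μ.parts.card) *
        (((μ.parts.card + 2).factorial : ℚ) /
          ∏ i ∈ μ.parts.toFinset, ((μ.parts.count i).factorial : ℚ)) *
        ((n : ℚ) ^ 2 + ((μ.parts.map (· ^ 2)).sum : ℕ))) • hsymmPart σ ℚ μ =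
      12 * PowerSeries.coeff n (E ^ 2 * eulerD (eulerD E)) := by
    have hI' : 12 * PowerSeries.coeff n (E ^ 2 * eulerD (eulerD E)) =
        (n : MvPolynomial σ ℚ) ^ 2 * (2 * PowerSeries.coeff n (E ^ 3)) +
        (-6 * PowerSeries.coeff n (E ^ 4 * eulerD (eulerD (PowerSeries.mk c)))) := by
      linear_combination hI
    rw [hI', ← hA, ← hB, Finset.mul_sum, ← Finset.sum_add_distrib]
    refine Finset.sum_congr rfl fun μ _ => ?_
    have hcard : μ.parts.card ≤ n := by
      have := Multiset.card_nsmul_le_sum (s := μ.parts) (a := 1) fun i hi => μ.parts_pos hi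
      simpa [μ.parts_sum] using this
    have hsign : (-1 : MvPolynomial σ ℚ) ^ (n - μ.parts.card) =
        (-1) ^ μ.parts.card * (-1) ^ n := by
      generalize μ.parts.card = l at hcard
      obtain ⟨d, rfl⟩ := Nat.exists_eq_add_of_le hcard
      rw [Nat.add_sub_cancel_left, pow_add, ← mul_assoc, ← mul_pow]
      simp
    rw [factorial_div_prod_eq, hcprod, μ.parts_sum, Algebra.smul_def, hsymmPart]
    simp only [map_mul, map_add, map_pow, map_neg, map_one, map_natCast, map_ofNat]
    rw [hsign]
    ring
  rw [hL, hR, Algebra.smul_def, ← mul_assoc, ← map_ofNat (algebraMap ℚ (MvPolynomial σ ℚ)) 12,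
    ← map_mul]
  norm_num
end

section
/- In any finite number of variables, the following identity of symmetric polynomials over ℚ holds: 2·p_2·p_1² + p_1⁴ + 12·p_2·p_1 + 8·p_1³ + 15·p_2 + 20·p_1² + 18·p_1 = 3·m_{(4)} + 8·m_{(3,1)} + 10·m_{(2,2)} + 16·m_{(2,1,1)} + 24·m_{(1,1,1,1)} + 20·m_{(3)} + 36·m_{(2,1)} + 48·m_{(1,1,1)} + 35·m_{(2)} + 40·m_{(1,1)} + 18·m_{(1)}. (Equivalently, the inhomogeneous symmetric function f_2 := (1/5760)(2p_2p_1² + p_1⁴ + 12p_2p_1 + 8p_1³ + 15p_2 + 20p_1² + 18p_1) has nonnegative coefficients in the monomial symmetric function basis, with 5760·f_2 given by the right-hand side.) -/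
/-!
The left-hand side is a combination of `p₁ ^ n` and `p₂ * p₁ ^ (n - 2)` for `n ≤ 4`, and each of
these has an explicit monomial expansion.

* By the multinomial theorem, `p₁ ^ n = ∑ μ ⊢ n, (n! / ∏ μᵢ!) m_μ` (`psum_one_pow`).
* The operator `D = ∑ i, xᵢ² ∂ᵢ²` sends `p₁ ^ n` to `n (n - 1) p₂ p₁ ^ (n - 2)`, and multiplies each
  monomial with exponents `d` by `∑ i, dᵢ (dᵢ - 1)`, a number depending only on the partition formed
  by the nonzero exponents. Applying `D` to the previous expansion gives
  `n (n - 1) p₂ p₁ ^ (n - 2) = ∑ μ ⊢ n, (n! / ∏ μᵢ!) (∑ μᵢ (μᵢ - 1)) m_μ`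
  (`psum_two_mul_psum_one_pow`).

Listing the partitions of `n ≤ 4` turns the theorem into a linear combination of these identities.
-/

open MvPolynomial Finset

/-- Removing one part reduces the enumeration of partitions of `n` to that of smaller numbers. -/
theorem exists_eq_cons_of_sum_pos {n : ℕ} {s : Multiset ℕ} (hn : 0 < n) (hs : s.sum = n)
    (h : ∀ i ∈ s, 0 < i) :
    ∃ a t, s = a ::ₘ t ∧ 0 < a ∧ a + t.sum = n ∧ ∀ i ∈ t, 0 < i := by
  induction s using Multiset.induction_on with
  | empty => simp at hs; omega
  | cons a t _ =>
    exact ⟨a, t, rfl, h a (by simp), by simpa using hs, fun i hi => h i (by simp [hi])⟩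

theorem eq_zero_of_sum_eq_zero {s : Multiset ℕ} (hs : s.sum = 0) (h : ∀ i ∈ s, 0 < i) :
    s = 0 := by
  refine Multiset.eq_zero_of_forall_notMem fun i hi => ?_
  have := h i hi
  have := Multiset.le_sum_of_mem hi
  omega

theorem parts_of_sum_one {s : Multiset ℕ} (hs : s.sum = 1) (h : ∀ i ∈ s, 0 < i) :
    s = {1} := by
  obtain ⟨a, t, rfl, ha, hat, ht⟩ := exists_eq_cons_of_sum_pos one_pos hs h
  obtain rfl : a = 1 := by omega
  rw [eq_zero_of_sum_eq_zero (s := t) (by omega) ht]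
  rfl

theorem parts_of_sum_two {s : Multiset ℕ} (hs : s.sum = 2) (h : ∀ i ∈ s, 0 < i) :
    s = {2} ∨ s = {1, 1} := by
  obtain ⟨a, t, rfl, ha, hat, ht⟩ := exists_eq_cons_of_sum_pos two_pos hs h
  have : a ≤ 2 := by omega
  interval_cases a
  · rw [parts_of_sum_one (s := t) (by omega) ht]; decide
  · rw [eq_zero_of_sum_eq_zero (s := t) (by omega) ht]; decide

theorem parts_of_sum_three {s : Multiset ℕ} (hs : s.sum = 3) (h : ∀ i ∈ s, 0 < i) :
    s = {3} ∨ s = {2, 1} ∨ s = {1, 1, 1} := by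
  obtain ⟨a, t, rfl, ha, hat, ht⟩ := exists_eq_cons_of_sum_pos three_pos hs h
  have : a ≤ 3 := by omega
  interval_cases a
  · rcases parts_of_sum_two (s := t) (by omega) ht with rfl | rfl <;> decide
  · rw [parts_of_sum_one (s := t) (by omega) ht]; decide
  · rw [eq_zero_of_sum_eq_zero (s := t) (by omega) ht]; decide

theorem parts_of_sum_four {s : Multiset ℕ} (hs : s.sum = 4) (h : ∀ i ∈ s, 0 < i) :
    s = {4} ∨ s = {3, 1} ∨ s = {2, 2} ∨ s = {2, 1, 1} ∨ s = {1, 1, 1, 1} := by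
  obtain ⟨a, t, rfl, ha, hat, ht⟩ := exists_eq_cons_of_sum_pos four_pos hs h
  have : a ≤ 4 := by omega
  interval_cases a
  · rcases parts_of_sum_three (s := t) (by omega) ht with rfl | rfl | rfl <;> decide
  · rcases parts_of_sum_two (s := t) (by omega) ht with rfl | rfl <;> decide
  · rw [parts_of_sum_one (s := t) (by omega) ht]; decide
  · rw [eq_zero_of_sum_eq_zero (s := t) (by omega) ht]; decide

theorem sum_partition_one {M : Type*} [AddCommMonoid M] (F : Nat.Partition 1 → M) :
    ∑ μ, F μ = F ⟨{1}, by decide, by decide⟩ := by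
  have h : (Finset.univ : Finset (Nat.Partition 1)) =
      {⟨{1}, by decide, by decide⟩} := by
    ext μ
    simp [Nat.Partition.ext_iff]
  rw [h]
  rw [Finset.sum_singleton]

theorem sum_partition_two {M : Type*} [AddCommMonoid M] (F : Nat.Partition 2 → M) :
    ∑ μ, F μ = F ⟨{2}, by decide, by decide⟩
      + F ⟨{1, 1}, by decide, by decide⟩ := by
  have h : (Finset.univ : Finset (Nat.Partition 2)) =
      {⟨{2}, by decide, by decide⟩,
        ⟨{1, 1}, by decide, by decide⟩} := by
    ext μ
    simpa [Nat.Partition.ext_iff] using parts_of_sum_two μ.parts_sum fun _ => μ.parts_pos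
  rw [h]
  rw [Finset.sum_insert (by decide)]
  rw [Finset.sum_singleton]

theorem sum_partition_three {M : Type*} [AddCommMonoid M] (F : Nat.Partition 3 → M) :
    ∑ μ, F μ = F ⟨{3}, by decide, by decide⟩
      + F ⟨{2, 1}, by decide, by decide⟩
      + F ⟨{1, 1, 1}, by decide, by decide⟩ := by
  have h : (Finset.univ : Finset (Nat.Partition 3)) =
      {⟨{3}, by decide, by decide⟩,
        ⟨{2, 1}, by decide, by decide⟩,
        ⟨{1, 1, 1}, by decide, by decide⟩} := by
    ext μ
    simpa [Nat.Partition.ext_iff] using parts_of_sum_three μ.parts_sum fun _ => μ.parts_pos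
  rw [h]
  rw [Finset.sum_insert (by decide)]
  rw [Finset.sum_insert (by decide)]
  rw [Finset.sum_singleton]
  simp only [add_assoc]

theorem sum_partition_four {M : Type*} [AddCommMonoid M] (F : Nat.Partition 4 → M) :
    ∑ μ, F μ = F ⟨{4}, by decide, by decide⟩
      + F ⟨{3, 1}, by decide, by decide⟩
      + F ⟨{2, 2}, by decide, by decide⟩
      + F ⟨{2, 1, 1}, by decide, by decide⟩
      + F ⟨{1, 1, 1, 1}, by decide, by decide⟩ := by
  have h : (Finset.univ : Finset (Nat.Partition 4)) =
      {⟨{4}, by decide, by decide⟩,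
        ⟨{3, 1}, by decide, by decide⟩,
        ⟨{2, 2}, by decide, by decide⟩,
        ⟨{2, 1, 1}, by decide, by decide⟩,
        ⟨{1, 1, 1, 1}, by decide, by decide⟩} := by
    ext μ
    simpa [Nat.Partition.ext_iff] using parts_of_sum_four μ.parts_sum fun _ => μ.parts_pos
  rw [h]
  rw [Finset.sum_insert (by decide)]
  rw [Finset.sum_insert (by decide)]
  rw [Finset.sum_insert (by decide)]
  rw [Finset.sum_insert (by decide)]
  rw [Finset.sum_singleton]
  simp only [add_assoc]

/-- The multinomial coefficient `n! / ∏ μᵢ!`: the number of words of length `n` having a given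
content of type `μ`. The natural-number division is exact. -/
def arrangements {n : ℕ} (μ : n.Partition) : ℕ := n.factorial / (μ.parts.map Nat.factorial).prod

/-- The eigenvalue `∑ μᵢ (μᵢ - 1)` of `∑ i, xᵢ² ∂ᵢ²` on monomials of type `μ`. The truncated
subtraction is harmless, since a zero part would contribute `0` anyway. -/
def diagEigenvalue {n : ℕ} (μ : n.Partition) : ℕ := (μ.parts.map fun k => k * (k - 1)).sum

/-- A combination of monomials whose coefficients depend only on the exponent partition, regrouped
by that partition. -/
theorem sum_sym_eq_sum_msymm (σ : Type*) [Fintype σ] [DecidableEq σ] {n : ℕ}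
    (G : n.Partition → ℕ) :
    ∑ s : Sym σ n, (G (.ofSym s) : MvPolynomial σ ℚ) * (s.1.map X).prod
      = ∑ μ, (G μ : MvPolynomial σ ℚ) * msymm σ ℚ μ := by
  rw [← Finset.sum_fiberwise _ (fun s : Sym σ n => Nat.Partition.ofSym s)]
  refine Finset.sum_congr rfl fun μ _ => ?_
  rw [msymm, Finset.mul_sum, Finset.sum_subtype (p := fun s : Sym σ n => .ofSym s = μ) _ (by simp)]
  exact Finset.sum_congr rfl fun s _ => by rw [s.2]

theorem countPerms_eq {σ : Type*} [DecidableEq σ] {n : ℕ} (s : Sym σ n) :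
    s.1.countPerms = arrangements (.ofSym s) := by
  have h : (s.1.toFinsupp.sum fun _ => id) = n := by
    have := Finsupp.card_toMultiset s.1.toFinsupp
    rw [Multiset.toFinsupp_toMultiset] at this
    exact this.symm.trans s.2
  rw [Multiset.countPerms, Finsupp.multinomial, h, arrangements, Nat.Partition.ofSym, Multiset.map_map]
  rfl

theorem psum_one_pow (σ : Type*) [Fintype σ] [DecidableEq σ] (n : ℕ) :
    psum σ ℚ 1 ^ n = ∑ μ : n.Partition, (arrangements μ : MvPolynomial σ ℚ) * msymm σ ℚ μ := by
  rw [psum_one, Finset.sum_pow, ← sum_sym_eq_sum_msymm, Finset.sym_univ]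
  exact Finset.sum_congr rfl fun s _ => by rw [countPerms_eq]

theorem prod_map_X {σ : Type*} [DecidableEq σ] (s : Multiset σ) :
    (s.map (X : σ → MvPolynomial σ ℚ)).prod = monomial s.toFinsupp 1 := by
  induction s using Multiset.induction_on with
  | empty => simp
  | cons a s ih =>
    rw [Multiset.map_cons, Multiset.prod_cons, ih, X, monomial_mul, ← Multiset.singleton_add,
      map_add, Multiset.toFinsupp_singleton, one_mul]

/-- Monomials are eigenvectors of `xᵢ² ∂ᵢ²`. -/
theorem X_sq_mul_pderiv_pderiv {σ : Type*} (i : σ) (d : σ →₀ ℕ) :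
    X i ^ 2 * pderiv i (pderiv i (monomial d (1 : ℚ)))
      = ((d i * (d i - 1) : ℕ) : MvPolynomial σ ℚ) * monomial d 1 := by
  classical
  rw [pderiv_monomial, pderiv_monomial, X_pow_eq_monomial, monomial_mul,
    ← map_natCast (C : ℚ →+* MvPolynomial σ ℚ), C_mul_monomial]
  -- When `d i < 2` both coefficients vanish, so the truncated exponents are irrelevant.
  rcases Nat.lt_or_ge (d i) 2 with h | h
  · have h0 : d i * (d i - 1) = 0 := by interval_cases d i <;> rfl
    have h1 : (d i : ℚ) * (((d - Finsupp.single i 1 : σ →₀ ℕ) i : ℕ) : ℚ) = 0 := by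
      rw [Finsupp.tsub_apply, Finsupp.single_eq_same]; exact_mod_cast h0
    rw [one_mul, one_mul, mul_one, h0, h1]; simp
  · have h1 : Finsupp.single i 2 + (d - Finsupp.single i 1 - Finsupp.single i 1) = d := by
      refine Finsupp.ext fun j => ?_
      by_cases hj : j = i
      · subst hj; simp; omega
      · simp [Ne.symm hj]
    rw [h1, Finsupp.tsub_apply, Finsupp.single_eq_same]
    simp

theorem pderiv_pderiv_psum (σ : Type*) [Fintype σ] [DecidableEq σ] (n : ℕ) (i : σ) :
    pderiv i (pderiv i (psum σ ℚ 1 ^ n))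
      = ((n * (n - 1) : ℕ) : MvPolynomial σ ℚ) * psum σ ℚ 1 ^ (n - 2) := by
  have h : pderiv i (psum σ ℚ 1) = 1 := by
    rw [psum_one, map_sum]; simp [pderiv_X, Pi.single_apply]
  rw [pderiv_pow, h, mul_one, Derivation.leibniz, pderiv_pow, h]
  simp [Nat.sub_sub]
  ring

/-- The expansion of `p₂ * p₁ ^ (n - 2)`, obtained by applying `∑ i, xᵢ² ∂ᵢ²` to that of
`p₁ ^ n`. For `n < 2`, where `n - 2` is truncated, both sides are zero. -/
theorem psum_two_mul_psum_one_pow (σ : Type*) [Fintype σ] [DecidableEq σ] (n : ℕ) :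
    ((n * (n - 1) : ℕ) : MvPolynomial σ ℚ) * (psum σ ℚ 2 * psum σ ℚ 1 ^ (n - 2))
      = ∑ μ : n.Partition, ((arrangements μ * diagEigenvalue μ : ℕ) : MvPolynomial σ ℚ) * msymm σ ℚ μ := by
  have h : ∑ i, X i ^ 2 * pderiv i (pderiv i (psum σ ℚ 1 ^ n))
      = ((n * (n - 1) : ℕ) : MvPolynomial σ ℚ) * (psum σ ℚ 2 * psum σ ℚ 1 ^ (n - 2)) := by
    simp_rw [pderiv_pderiv_psum]
    rw [← Finset.sum_mul, psum.eq_1 σ ℚ 2]; ring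
  rw [← h, ← sum_sym_eq_sum_msymm, psum_one_pow, ← sum_sym_eq_sum_msymm]
  simp_rw [map_sum, Finset.mul_sum]
  rw [Finset.sum_comm]
  refine Finset.sum_congr rfl fun s _ => ?_
  have hp : diagEigenvalue (.ofSym s) = ∑ i, s.1.toFinsupp i * (s.1.toFinsupp i - 1) := by
    rw [diagEigenvalue, Nat.Partition.ofSym, Multiset.map_map]
    change ∑ i ∈ s.1.toFinset, s.1.count i * (s.1.count i - 1) = _
    simp_rw [Multiset.toFinsupp_apply]
    refine Finset.sum_subset (Finset.subset_univ _) fun i _ hi => ?_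
    rw [Multiset.count_eq_zero_of_notMem (by simpa using hi), zero_mul]
  simp_rw [prod_map_X, ← nsmul_eq_mul, map_nsmul, mul_smul_comm, X_sq_mul_pderiv_pderiv]
  rw [← Finset.smul_sum, ← Finset.sum_mul, hp]
  simp only [nsmul_eq_mul]
  push_cast
  ring

/-- **Theorem 1 (monomial expansion of `5760 f₂`).** In any finite number of variables over `ℚ`:
`2p₂p₁² + p₁⁴ + 12p₂p₁ + 8p₁³ + 15p₂ + 20p₁² + 18p₁
 = 3m₄ + 8m₃₁ + 10m₂₂ + 16m₂₁₁ + 24m₁₁₁₁ + 20m₃ + 36m₂₁ + 48m₁₁₁ + 35m₂ + 40m₁₁ + 18m₁`. -/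
theorem f2_monomial_expansion (σ : Type*) [Fintype σ] [DecidableEq σ] :
    2 * psum σ ℚ 2 * (psum σ ℚ 1) ^ 2 + (psum σ ℚ 1) ^ 4
      + 12 * psum σ ℚ 2 * psum σ ℚ 1 + 8 * (psum σ ℚ 1) ^ 3
      + 15 * psum σ ℚ 2 + 20 * (psum σ ℚ 1) ^ 2 + 18 * psum σ ℚ 1 =
    3 * msymm σ ℚ (⟨{4}, by decide, by decide⟩ : Nat.Partition 4)
      + 8 * msymm σ ℚ (⟨{3,1}, by decide, by decide⟩ : Nat.Partition 4)
      + 10 * msymm σ ℚ (⟨{2,2}, by decide, by decide⟩ : Nat.Partition 4)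
      + 16 * msymm σ ℚ (⟨{2,1,1}, by decide, by decide⟩ : Nat.Partition 4)
      + 24 * msymm σ ℚ (⟨{1,1,1,1}, by decide, by decide⟩ : Nat.Partition 4)
      + 20 * msymm σ ℚ (⟨{3}, by decide, by decide⟩ : Nat.Partition 3)
      + 36 * msymm σ ℚ (⟨{2,1}, by decide, by decide⟩ : Nat.Partition 3)
      + 48 * msymm σ ℚ (⟨{1,1,1}, by decide, by decide⟩ : Nat.Partition 3)
      + 35 * msymm σ ℚ (⟨{2}, by decide, by decide⟩ : Nat.Partition 2)
      + 40 * msymm σ ℚ (⟨{1,1}, by decide, by decide⟩ : Nat.Partition 2)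
      + 18 * msymm σ ℚ (⟨{1}, by decide, by decide⟩ : Nat.Partition 1) := by
  have a1 := psum_one_pow σ 1
  have a2 := psum_one_pow σ 2
  have a3 := psum_one_pow σ 3
  have a4 := psum_one_pow σ 4
  have b2 := psum_two_mul_psum_one_pow σ 2
  have b3 := psum_two_mul_psum_one_pow σ 3
  have b4 := psum_two_mul_psum_one_pow σ 4
  rw [sum_partition_one] at a1
  rw [sum_partition_two] at a2 b2
  rw [sum_partition_three] at a3 b3
  rw [sum_partition_four] at a4 b4
  simp [-psum_one, arrangements, diagEigenvalue, Nat.factorial] at a1 a2 a3 a4 b2 b3 b4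
  -- The factor `6` clears the denominator of the coefficient `2 / 12` of `b4`.
  have h6 : (6 : MvPolynomial σ ℚ) ≠ 0 := by norm_num
  refine mul_left_cancel₀ h6 ?_
  linear_combination 108 * a1 + 120 * a2 + 48 * a3 + 6 * a4 + 90 * b2 + 12 * b3 + b4
end

section
/- Let R be a commutative ℚ-algebra, let a, b, c ∈ R, and let q_1, q_2, q_3, … be any sequence of elements of R. Define C_0 = 1 and, for m ≥ 1, C_m = Σ_{μ ⊢ m} Π_{i≥1} q_i^{m_i(μ)} / m_i(μ)!. Then for every integer n ≥ 1: Σ_{(i,j,k)∈ℕ³, i+j+k=n} (a + b·i + c·i²) · C_i·C_j·C_k = Σ_{μ ⊢ n} 3^{ℓ(μ)} · (a + (b/3)·n + (c/9)·(n² + 2·p_2(μ))) · Π_{i≥1} q_i^{m_i(μ)} / m_i(μ)!. -/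
open Finset

/-!
The statement is read off from generating functions. For a sequence `r`, let `E_r` be the power
series whose `m`-th coefficient is `∑_{μ ⊢ m} ∏ᵢ rᵢ^{mᵢ(μ)}/mᵢ(μ)!`; morally
`E_r = exp (∑ rᵢ Xⁱ)`. Removing one part `i` from a partition gives the marking rule
(`sum_map_mul_weight`)
`∑_{μ ⊢ n} (∑_j f(μ_j)) w_r(μ) = [Xⁿ] (∑ f(i) rᵢ Xⁱ) · E_r`.

Write `θ = X d/dX`, `E = E_q`, `S = E_{3q}`, `G = ∑ i qᵢ Xⁱ`. The rule with `f(i) = i` gives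
`θ E = G E` and `θ S = 3 G S`. A solution of such an equation is determined by its constant
coefficient, so `S = E³`. Hence the left-hand side is the `n`-th coefficient of
`a S + b G S + c (G² + θ G) S`. On the right-hand side, `n` and `n²` act on `S` as `θ` and `θ²`, with
`θ S = 3 G S` and `θ² S = (9 G² + 3 θ G) S`, while the rule with `f(i) = i²` turns `p₂` into
multiplication by `3 θ G`. The two sides agree term by term.
-/

namespace QuadraticConvolution

open PowerSeries

variable {R : Type*} [CommRing R] [Algebra ℚ R]

/-- The weight `∏ᵢ rᵢ^{mᵢ}/mᵢ!` of a multiset `s`, where `mᵢ` is the multiplicity of `i` in `s`. -/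
noncomputable def weight (r : ℕ → R) (s : Multiset ℕ) : R :=
  ∏ i ∈ s.toFinset, (((s.count i).factorial : ℚ))⁻¹ • r i ^ (s.count i)

/-- The generating series `E_r` of the total weights of the partitions of each `m`. -/
noncomputable def genSeries (r : ℕ → R) : PowerSeries R :=
  PowerSeries.mk fun m => ∑ μ : m.Partition, weight r μ.parts

/-- The Euler operator `θ = X d/dX`. -/
noncomputable def euler (F : PowerSeries R) : PowerSeries R := X * derivative R F

omit [Algebra ℚ R] in
lemma coeff_euler (F : PowerSeries R) (n : ℕ) : coeff n (euler F) = n * coeff n F := by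
  cases n with
  | zero => simp [euler]
  | succ n => simp [euler, coeff_succ_X_mul, coeff_derivative, mul_comm]

omit [Algebra ℚ R] in
lemma euler_mul (F G : PowerSeries R) : euler (F * G) = euler F * G + F * euler G := by
  simp only [euler, Derivation.leibniz, smul_eq_mul]
  ring

lemma weight_eq_prod (r : ℕ → R) {s : Multiset ℕ} {t : Finset ℕ} (h : s.toFinset ⊆ t) :
    weight r s = ∏ i ∈ t, (((s.count i).factorial : ℚ))⁻¹ • r i ^ (s.count i) := by
  refine Finset.prod_subset h fun i _ hi => ?_
  have : s.count i = 0 := Multiset.count_eq_zero.2 (by simpa using hi)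
  simp [this]

/-- Removing one copy of `i` lowers `rᵢ^m/m!` to `rᵢ^(m-1)/(m-1)!`. -/
lemma count_mul_weight_cons (r : ℕ → R) (i : ℕ) (s : Multiset ℕ) :
    ((i ::ₘ s).count i : R) * weight r (i ::ₘ s) = r i * weight r s := by
  have h1 : (i ::ₘ s).toFinset ⊆ insert i s.toFinset := by simp
  rw [weight_eq_prod r h1, weight_eq_prod r (Finset.subset_insert i s.toFinset),
    ← Finset.mul_prod_erase _ _ (Finset.mem_insert_self i s.toFinset),
    ← Finset.mul_prod_erase _ _ (Finset.mem_insert_self i s.toFinset), ← mul_assoc, ← mul_assoc]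
  congr 1
  · rw [Multiset.count_cons_self]
    set k := s.count i
    have hk : ((k : ℚ) + 1) ≠ 0 := by positivity
    have hc : ((k + 1 : ℕ) : R) = algebraMap ℚ R ((k : ℚ) + 1) := by simp
    rw [hc, ← Algebra.smul_def, smul_smul, mul_smul_comm, pow_succ', Nat.factorial_succ]
    congr 1
    push_cast
    field_simp
  · refine Finset.prod_congr rfl fun j hj => ?_
    rw [Multiset.count_cons_of_ne (Finset.ne_of_mem_erase hj)]

/-- Marking a part equal to `i` in a partition of `k + i` leaves a partition of `k`. -/
lemma sum_count_mul_weight (r : ℕ → R) (k i : ℕ) (hi : 0 < i) :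
    ∑ μ : (k + i).Partition, (μ.parts.count i : R) * weight r μ.parts =
      r i * ∑ ν : k.Partition, weight r ν.parts := by
  rw [Finset.mul_sum]
  symm
  refine Fintype.sum_of_injective
    (fun ν : k.Partition => (⟨i ::ₘ ν.parts, by
      intro j hj
      rcases Multiset.mem_cons.1 hj with rfl | hj
      · exact hi
      · exact ν.parts_pos hj, by
      rw [Multiset.sum_cons, ν.parts_sum, add_comm]⟩ : (k + i).Partition)) ?_ _ _ ?_ ?_
  · intro ν ν' h
    have := congrArg Nat.Partition.parts h
    exact Nat.Partition.ext (by simpa using this)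
  · intro μ hμ
    have : i ∉ μ.parts := by
      intro hmem
      obtain ⟨s, hs⟩ := Multiset.exists_cons_of_mem hmem
      refine hμ ⟨⟨s, fun {j} hj => μ.parts_pos (by rw [hs]; exact Multiset.mem_cons_of_mem hj), ?_⟩,
        Nat.Partition.ext hs.symm⟩
      have := μ.parts_sum
      rw [hs, Multiset.sum_cons] at this
      omega
    simp [Multiset.count_eq_zero.2 this]
  · intro ν
    exact (count_mul_weight_cons r i ν.parts).symm

/-- The marking rule: weighting partitions additively by `f` over their parts multiplies the
generating series by `∑ f(i) rᵢ Xⁱ`. -/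
lemma sum_map_mul_weight (r : ℕ → R) (f : ℕ → ℕ) (hf : f 0 = 0) (n : ℕ) :
    ∑ μ : n.Partition, (((μ.parts.map f).sum : ℕ) : R) * weight r μ.parts =
      coeff n (PowerSeries.mk (fun i => (f i : R) * r i) * genSeries r) := by
  have h1 : ∀ μ : n.Partition, (((μ.parts.map f).sum : ℕ) : R) * weight r μ.parts =
      ∑ i ∈ Finset.range (n + 1), (f i : R) * ((μ.parts.count i : R) * weight r μ.parts) := by
    intro μ
    have hsub : μ.parts.toFinset ⊆ Finset.range (n + 1) := by
      intro i hi
      have := Multiset.le_sum_of_mem (Multiset.mem_toFinset.1 hi)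
      rw [μ.parts_sum] at this
      exact Finset.mem_range.2 (by omega)
    rw [Finset.sum_multiset_map_count, Finset.sum_subset hsub, Nat.cast_sum, Finset.sum_mul]
    · refine Finset.sum_congr rfl fun i _ => ?_
      push_cast [smul_eq_mul]
      ring
    · intro i _ hi
      rw [Multiset.count_eq_zero.2 (by simpa using hi), zero_smul]
  rw [Finset.sum_congr rfl fun μ _ => h1 μ, Finset.sum_comm, coeff_mul,
    Finset.Nat.sum_antidiagonal_eq_sum_range_succ_mk]
  refine Finset.sum_congr rfl fun i hi => ?_
  rw [← Finset.mul_sum]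
  rcases Nat.eq_zero_or_pos i with rfl | hpos
  · simp [hf]
  · obtain ⟨k, rfl⟩ := Nat.exists_eq_add_of_le' (Nat.lt_succ_iff.1 (Finset.mem_range.1 hi))
    rw [sum_count_mul_weight r k i hpos]
    simp [genSeries, mul_assoc]

lemma coeff_zero_genSeries (r : ℕ → R) : coeff 0 (genSeries r) = 1 := by
  simp [genSeries, weight]

/-- `θ E_r = (∑ i rᵢ Xⁱ) E_r`. -/
lemma euler_genSeries (r : ℕ → R) :
    euler (genSeries r) = PowerSeries.mk (fun i => (i : R) * r i) * genSeries r := by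
  ext n
  rw [coeff_euler, ← sum_map_mul_weight r (fun i => i) rfl n, genSeries, coeff_mk, Finset.mul_sum]
  refine Finset.sum_congr rfl fun μ _ => ?_
  rw [Multiset.map_id', μ.parts_sum]

/-- A solution of `θ H = G H` with `G(0) = 0` is determined by its constant coefficient. -/
lemma eq_zero_of_euler_eq {G H : PowerSeries R} (hG : coeff 0 G = 0) (hH : coeff 0 H = 0)
    (h : euler H = G * H) : H = 0 := by
  ext n
  rw [map_zero]
  induction n using Nat.strong_induction_on with
  | _ n ih =>
    rcases Nat.eq_zero_or_pos n with rfl | hn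
    · exact hH
    have h1 : (n : R) * coeff n H = 0 := by
      rw [← coeff_euler, h, coeff_mul]
      refine Finset.sum_eq_zero fun p hp => ?_
      have hp := Finset.HasAntidiagonal.mem_antidiagonal.1 hp
      rcases Nat.eq_zero_or_pos p.1 with h0 | h0
      · rw [h0, hG, zero_mul]
      · rw [ih p.2 (by omega), mul_zero]
    have hn' : (n : ℚ) ≠ 0 := by positivity
    have h2 : (n : ℚ) • coeff n H = 0 := by rw [Algebra.smul_def, map_natCast, h1]
    simpa [smul_smul, hn'] using congrArg (fun x => (n : ℚ)⁻¹ • x) h2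

lemma weight_three_mul (q : ℕ → R) (s : Multiset ℕ) :
    weight (fun i => 3 * q i) s = (3 : R) ^ s.card * weight q s := by
  rw [weight, weight, ← Multiset.toFinset_sum_count_eq, ← Finset.prod_pow_eq_pow_sum,
    ← Finset.prod_mul_distrib]
  refine Finset.prod_congr rfl fun i _ => ?_
  rw [mul_pow, mul_smul_comm]

/-- `E_{3q} = E_q³`. -/
lemma genSeries_three_mul (q : ℕ → R) :
    genSeries (fun i => 3 * q i) = genSeries q * genSeries q * genSeries q := by
  rw [← sub_eq_zero]
  have hG : PowerSeries.mk (fun i => (i : R) * (3 * q i)) =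
      3 * PowerSeries.mk (fun i => (i : R) * q i) := by
    ext n
    rw [show (3 : PowerSeries R) = PowerSeries.C 3 from (map_ofNat _ 3).symm, coeff_C_mul]
    simp only [coeff_mk]
    ring
  refine eq_zero_of_euler_eq (G := 3 * PowerSeries.mk (fun i => (i : R) * q i)) ?_ ?_ ?_
  · rw [← hG]; simp
  · have h0 : ∀ r : ℕ → R, constantCoeff (genSeries r) = 1 := fun r => by
      simpa using coeff_zero_genSeries r
    simp [h0]
  · have hsub : ∀ F H : PowerSeries R, euler (F - H) = euler F - euler H := by
      intro F H; simp [euler, mul_sub]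
    rw [hsub, euler_mul, euler_mul, euler_genSeries, euler_genSeries, hG]
    ring

omit [Algebra ℚ R] in
/-- The coefficients of a triple product, as sums over `antidiagonalTuple 3 n`. -/
lemma coeff_mul_mul (F G H : PowerSeries R) (n : ℕ) :
    coeff n (F * G * H) = ∑ v ∈ Finset.Nat.antidiagonalTuple 3 n,
      coeff (v 0) F * (coeff (v 1) G * coeff (v 2) H) := by
  rw [mul_assoc, coeff_mul]
  simp_rw [coeff_mul, Finset.mul_sum]
  rw [Finset.sum_sigma']
  refine Finset.sum_bij' (fun x _ => ![x.1.1, x.2.1, x.2.2])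
    (fun v _ => ⟨(v 0, v 1 + v 2), (v 1, v 2)⟩) ?_ ?_ ?_ ?_ ?_
  · rintro ⟨⟨i, m⟩, ⟨j, k⟩⟩ h
    simp only [Finset.mem_sigma, Finset.HasAntidiagonal.mem_antidiagonal] at h
    simp [Finset.Nat.mem_antidiagonalTuple, Fin.sum_univ_three]
    omega
  · intro v h
    simp only [Finset.Nat.mem_antidiagonalTuple, Fin.sum_univ_three] at h
    simp only [Finset.mem_sigma, Finset.HasAntidiagonal.mem_antidiagonal, and_true]
    omega
  · rintro ⟨⟨i, m⟩, ⟨j, k⟩⟩ h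
    simp only [Finset.mem_sigma, Finset.HasAntidiagonal.mem_antidiagonal] at h
    obtain ⟨-, rfl⟩ := h
    rfl
  · intro v _
    ext j
    fin_cases j <;> rfl
  · rintro ⟨⟨i, m⟩, ⟨j, k⟩⟩ _
    rfl

end QuadraticConvolution

open QuadraticConvolution PowerSeries in
/-- **Quadratic weighted convolution identity (Q-expansion form).** If
`C₀ = 1` and `C_m = ∑_{μ ⊢ m} ∏ᵢ qᵢ^{mᵢ(μ)}/mᵢ(μ)!` for `m ≥ 1`, then for `n ≥ 1`:
`∑_{i+j+k=n} (a + bi + ci²) Cᵢ Cⱼ C_k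
  = ∑_{μ ⊢ n} 3^{ℓ(μ)} (a + (b/3)n + (c/9)(n² + 2p₂(μ))) ∏ᵢ qᵢ^{mᵢ(μ)}/mᵢ(μ)!`. -/
theorem quadratic_convolution_Q_expansion (R : Type*) [CommRing R] [Algebra ℚ R]
    (a b c : R) (q : ℕ → R) (C : ℕ → R) (hC0 : C 0 = 1)
    (hC : ∀ m : ℕ, 1 ≤ m → C m = ∑ μ : m.Partition,
      ∏ i ∈ μ.parts.toFinset,
        (((μ.parts.count i).factorial : ℚ))⁻¹ • q i ^ (μ.parts.count i))
    (n : ℕ) (hn : 1 ≤ n) :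
    ∑ v ∈ Finset.Nat.antidiagonalTuple 3 n,
        (a + (v 0) • b + ((v 0) ^ 2) • c) * (C (v 0) * C (v 1) * C (v 2)) =
    ∑ μ : n.Partition,
      ((3 : ℚ) ^ μ.parts.card) •
        ((a + ((n : ℚ) / 3) • b
            + (((n : ℚ) ^ 2 + 2 * ((μ.parts.map (· ^ 2)).sum : ℕ)) / 9) • c) *
          ∏ i ∈ μ.parts.toFinset,
            (((μ.parts.count i).factorial : ℚ))⁻¹ • q i ^ (μ.parts.count i)) := by
  have hCE : ∀ m, C m = coeff m (genSeries q) := by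
    intro m
    rcases Nat.eq_zero_or_pos m with rfl | hm
    · rw [hC0, coeff_zero_genSeries]
    · rw [hC m hm, genSeries, coeff_mk]; rfl
  set E := genSeries q with hE
  set S := genSeries (fun i => 3 * q i) with hS
  set G : PowerSeries R := PowerSeries.mk (fun i => (i : R) * q i) with hG
  have hES : S = E * E * E := genSeries_three_mul q
  have hθE : euler E = G * E := euler_genSeries q
  have hθθE : euler (euler E) = (euler G + G * G) * E := by
    rw [hθE, euler_mul, hθE]; ring
  have hθS : euler S = 3 * (G * S) := by
    rw [hES, euler_mul, euler_mul, hθE]; ring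
  have hθθS : euler (euler S) = 9 * (G * G * S) + 3 * (euler G * S) := by
    have h3 : ∀ F : PowerSeries R, euler (3 * F) = 3 * euler F := by
      intro F
      rw [show (3 : PowerSeries R) = 1 + 1 + 1 by norm_num]
      simp only [add_mul, one_mul, euler, map_add, mul_add]
    rw [hθS, h3, euler_mul, hθS]; ring
  have hnum : ∀ (k : ℕ) (F : PowerSeries R), coeff n ((k : PowerSeries R) * F) =
      (k : R) * coeff n F := by
    intro k F
    rw [← map_natCast (PowerSeries.C (R := R)) k, coeff_C_mul]
  have hn1 : (n : R) * coeff n S = 3 * coeff n (G * S) := by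
    rw [← coeff_euler, hθS]
    exact_mod_cast hnum 3 _
  have hn2 : (n : R) * ((n : R) * coeff n S) =
      9 * coeff n (G * G * S) + 3 * coeff n (euler G * S) := by
    rw [← coeff_euler, ← coeff_euler, hθθS, map_add]
    congr 1
    · exact_mod_cast hnum 9 _
    · exact_mod_cast hnum 3 _
  have hp2 : ∑ μ : n.Partition, (((μ.parts.map (· ^ 2)).sum : ℕ) : R) *
      weight (fun i => 3 * q i) μ.parts = 3 * coeff n (euler G * S) := by
    rw [sum_map_mul_weight _ (· ^ 2) (by simp) n]
    rw [← show coeff n (3 * (euler G * S)) = 3 * coeff n (euler G * S) from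
      by exact_mod_cast hnum 3 _, ← mul_assoc]
    congr 2
    ext m
    rw [show (3 : PowerSeries R) = PowerSeries.C 3 from (map_ofNat _ 3).symm, coeff_C_mul, coeff_euler]
    simp only [hG, coeff_mk]
    push_cast
    ring
  have hu : ∑ μ : n.Partition, weight (fun i => 3 * q i) μ.parts = coeff n S := by
    rw [hS, genSeries, coeff_mk]
  have hL : ∑ v ∈ Finset.Nat.antidiagonalTuple 3 n,
        (a + (v 0) • b + ((v 0) ^ 2) • c) * (C (v 0) * C (v 1) * C (v 2)) =
      a * coeff n S + b * coeff n (G * S) +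
        c * (coeff n (G * G * S) + coeff n (euler G * S)) := by
    have e1 : G * S = euler E * E * E := by rw [hES, hθE]; ring
    have e2 : coeff n (G * G * S) + coeff n (euler G * S) =
        coeff n (euler (euler E) * E * E) := by
      rw [← map_add, hES, hθθE]; congr 1; ring
    rw [e2, e1, hES]
    simp only [coeff_mul_mul, Finset.mul_sum, ← Finset.sum_add_distrib, coeff_euler, hCE]
    refine Finset.sum_congr rfl fun v _ => ?_
    simp only [nsmul_eq_mul]
    push_cast
    ring
  -- The rational coefficients of the right-hand side, moved into `R`.
  set t : R := algebraMap ℚ R (1 / 3) with ht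
  have ht3 : 3 * t = 1 := by
    rw [ht, ← map_ofNat (algebraMap ℚ R) 3, ← map_mul]; norm_num
  have hR : ∀ μ : n.Partition, ((3 : ℚ) ^ μ.parts.card) •
        ((a + ((n : ℚ) / 3) • b
            + (((n : ℚ) ^ 2 + 2 * ((μ.parts.map (· ^ 2)).sum : ℕ)) / 9) • c) *
          ∏ i ∈ μ.parts.toFinset,
            (((μ.parts.count i).factorial : ℚ))⁻¹ • q i ^ (μ.parts.count i)) =
      (a + t * n * b + t ^ 2 * n ^ 2 * c) * weight (fun i => 3 * q i) μ.parts +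
        2 * t ^ 2 * c * ((((μ.parts.map (· ^ 2)).sum : ℕ) : R) *
          weight (fun i => 3 * q i) μ.parts) := by
    intro μ
    rw [weight_three_mul, show (∏ i ∈ μ.parts.toFinset,
            (((μ.parts.count i).factorial : ℚ))⁻¹ • q i ^ (μ.parts.count i)) =
            weight q μ.parts from rfl]
    generalize (μ.parts.map (· ^ 2)).sum = p
    rw [show (n : ℚ) / 3 = 1 / 3 * n by ring,
      show ((n : ℚ) ^ 2 + 2 * (p : ℚ)) / 9 = (1 / 3) ^ 2 * (n ^ 2 + 2 * p) by ring]
    simp only [Algebra.smul_def, map_mul, map_add, map_pow, map_natCast, map_ofNat, ← ht]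
    ring
  rw [hL, Finset.sum_congr rfl fun μ _ => hR μ, Finset.sum_add_distrib, ← Finset.mul_sum,
    ← Finset.mul_sum, hp2, hu]
  have ht9 : 9 * t ^ 2 = 1 := by linear_combination (3 * t + 1) * ht3
  linear_combination (-t * b) * hn1 - t ^ 2 * c * hn2 - b * coeff n (G * S) * ht3 -
    c * (coeff n (G * G * S) + coeff n (euler G * S)) * ht9
end

section
/- Let μ be a partition of an integer n ≥ 1 with multiplicities m_i(μ) and length ℓ(μ), and let P(z) = Π_{i≥1} (z^i + 2)^{m_i(μ)} ∈ ℚ[z]. Then the second derivative of P at z = 1 satisfies 9 · P''(1) = 3^{ℓ(μ)} · (n² − 3n + 2·p_2(μ)), i.e. P''(1) = 3^{ℓ(μ)−2}(n² − 3n + 2 p_2(μ)). -/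
open Polynomial

/-!
The polynomial is the product of `X ^ i + 2` over the multiset of parts. Adding a part `a` multiplies
it by `X ^ a + 2`, whose value and first two derivatives at `1` are `3`, `a` and `a * (a - 1)`.
Hence, by induction on the multiset and the Leibniz rule, the value at `1` is `3 ^ ℓ`, three times the
first derivative is `3 ^ ℓ * n`, and nine times the second one is `3 ^ ℓ * (n ^ 2 - 3 * n + 2 * p₂)`.
The three formulas are proved together in `eval_derivatives_prod_pow_add_two`.
-/

lemma eval_one_derivative_derivative_X_pow (a : ℕ) :
    (derivative (derivative ((X : ℚ[X]) ^ a))).eval 1 = (a : ℚ) * (a - 1) := by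
  cases a <;> simp [derivative_X_pow]

/-- The value and the first two derivatives at `1` of `∏ (X ^ i + 2)` over an arbitrary multiset of
naturals, with denominators cleared. -/
lemma eval_derivatives_prod_pow_add_two (s : Multiset ℕ) :
    ((s.map fun i => (X : ℚ[X]) ^ i + 2).prod).eval 1 = 3 ^ s.card ∧
    3 * (derivative (s.map fun i => (X : ℚ[X]) ^ i + 2).prod).eval 1 = 3 ^ s.card * (s.sum : ℚ) ∧
    9 * (derivative (derivative (s.map fun i => (X : ℚ[X]) ^ i + 2).prod)).eval 1 =
      3 ^ s.card * ((s.sum : ℚ) ^ 2 - 3 * (s.sum : ℚ) + 2 * ((s.map (· ^ 2)).sum : ℕ)) := by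
  induction s using Multiset.induction_on with
  | empty => simp
  | cons a s ih =>
    obtain ⟨h0, h1, h2⟩ := ih
    simp only [Multiset.map_cons, Multiset.prod_cons, Multiset.sum_cons, Multiset.card_cons]
    generalize (s.map fun i => (X : ℚ[X]) ^ i + 2).prod = Q at *
    have e0 : ((X : ℚ[X]) ^ a + 2).eval 1 = 3 := by simp; norm_num
    have e1 : (derivative ((X : ℚ[X]) ^ a + 2)).eval 1 = (a : ℚ) := by
      simp [derivative_X_pow]
    have e2 : (derivative (derivative ((X : ℚ[X]) ^ a + 2))).eval 1 = (a : ℚ) * (a - 1) := by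
      rw [← eval_one_derivative_derivative_X_pow]; simp
    generalize (X : ℚ[X]) ^ a + 2 = F at *
    generalize (s.map (· ^ 2)).sum = p at *
    generalize s.sum = t at *
    simp only [derivative_mul, derivative_add, eval_add, eval_mul, e0, e1, e2, pow_succ]
    push_cast
    refine ⟨?_, ?_, ?_⟩
    · linear_combination 3 * h0
    · linear_combination 3 * a * h0 + 3 * h1
    · linear_combination 9 * a * (a - 1) * h0 + 6 * a * h1 + 3 * h2

/-- **Key derivative computation in Lemma 1.** For a partition `μ` of `n ≥ 1`, with
`P(z) = ∏_{i≥1} (zⁱ + 2)^{mᵢ(μ)}`, one has `9 P''(1) = 3^{ℓ(μ)} (n² − 3n + 2p₂(μ))`. -/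
theorem second_deriv_prod_pow_add_two (n : ℕ) (hn : 1 ≤ n) (μ : n.Partition) :
    9 * (Polynomial.derivative (Polynomial.derivative
        (∏ i ∈ μ.parts.toFinset,
          ((Polynomial.X : Polynomial ℚ) ^ i + 2) ^ (μ.parts.count i)))).eval 1 =
      3 ^ μ.parts.card *
        ((n : ℚ) ^ 2 - 3 * (n : ℚ) + 2 * ((μ.parts.map (· ^ 2)).sum : ℕ)) := by
  have h := (eval_derivatives_prod_pow_add_two μ.parts).2.2
  rwa [μ.parts_sum, Finset.prod_multiset_map_count] at h
end

section
/- Define F_2(ν) = (1/2880)(4·p_2(ν)·p_1(ν)² − p_1(ν)⁴ + 24·p_2(ν)·p_1(ν) − 4·p_1(ν)³ + 30·p_2(ν) + 5·p_1(ν)² + 18·p_1(ν)) for ν ∈ ℕ³, and f_2(μ) = (1/5760)(2·p_2(μ)·p_1(μ)² + p_1(μ)⁴ + 12·p_2(μ)·p_1(μ) + 8·p_1(μ)³ + 15·p_2(μ) + 20·p_1(μ)² + 18·p_1(μ)) for a partition μ. Then for every integer n ≥ 1 and every finite number of variables, the following identity of symmetric polynomials over ℚ holds: Σ_{ν∈ℕ³,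 ν_1+ν_2+ν_3=n} F_2(ν) · e_{ν_1}·e_{ν_2}·e_{ν_3} = Σ_{μ ⊢ n} (−1)^{n−ℓ(μ)} · f_2(μ) · ((ℓ(μ)+2)! / Π_i m_i(μ)!) · h_μ. -/
/-!
Let `E = ∑ eᵢ tⁱ`, `a_i = (-1)^(i-1) h_i` for `i ≥ 1`, and `A = ∑_{i ≥ 1} a_i tⁱ`. The relation
`E(t) H(-t) = 1` says `E = (1 - A)⁻¹`. Since `p₁ = n` on both sides, `F₂` and `f₂` are affine in
`p₂`, so only four sums matter: those of `e_ν` and of `p₂(ν) e_ν` over triples `ν`,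
called `T₁` and `T₂`, and those with the weights `1` and `p₂(μ)` over partitions `μ`, called
`S₁` and `S₂`.

With `θ = t d/dt`, `T₁ = [tⁿ] E³` and `T₂ = [tⁿ] 3 E² θ²E`. The sign `(-1)^(n - ℓ)` turns `h_μ`
into `a_μ`, and `(ℓ + 2)! / ∏ mᵢ!` is `(ℓ + 1)(ℓ + 2)` times a multinomial coefficient, so the
multinomial theorem gives `S₁ = [tⁿ] ∑ (ℓ + 1)(ℓ + 2) A^ℓ = [tⁿ] 2 E³`
(`sum_partition_eq_coeff_cube`). Replacing `a_i` by `a_i (1 + i² ε)` over the dual numbers and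
comparing `ε`-components gives `S₂ = [tⁿ] 6 E⁴ θ²A` (`sum_partition_sq_eq_coeff`). Finally
`E⁴ θ²A = E² θ²E - 2 E (θE)²` (`pow_four_mul_euler_euler`) and
`θ²(E³) = 3 E² θ²E + 6 E (θE)²` yield `S₁ = 2 T₁` and `S₂ = 4 T₂ - 2 n² T₁`, after which the claim
is a comparison of polynomial coefficients in `n`.
-/

open MvPolynomial Finset

/-- The weight function `F₂`, as a function of the first two power sums of its argument. -/
def F2val (p1 p2 : ℚ) : ℚ :=
  (1 / 2880) * (4 * p2 * p1 ^ 2 - p1 ^ 4 + 24 * p2 * p1 - 4 * p1 ^ 3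
    + 30 * p2 + 5 * p1 ^ 2 + 18 * p1)

/-- The weight function `f₂`, as a function of the first two power sums of its argument. -/
def f2val (p1 p2 : ℚ) : ℚ :=
  (1 / 5760) * (2 * p2 * p1 ^ 2 + p1 ^ 4 + 12 * p2 * p1 + 8 * p1 ^ 3
    + 15 * p2 + 20 * p1 ^ 2 + 18 * p1)

namespace KerovTwo

open PowerSeries (coeff)

/-! ### The Euler operator -/

/-- The Euler operator `θ = X · d/dX` on power series; it multiplies the coefficient of `X ^ n`
by `n`. -/
noncomputable def euler {R : Type*} [CommRing R] (f : PowerSeries R) : PowerSeries R :=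
  PowerSeries.X * PowerSeries.derivative R f

lemma coeff_euler {R : Type*} [CommRing R] (f : PowerSeries R) (n : ℕ) :
    coeff n (euler f) = n * coeff n f := by
  cases n with
  | zero => simp [euler]
  | succ n =>
    rw [euler, PowerSeries.coeff_succ_X_mul, PowerSeries.coeff_derivative]
    push_cast
    ring

lemma euler_mul {R : Type*} [CommRing R] (f g : PowerSeries R) :
    euler (f * g) = euler f * g + f * euler g := by
  simp only [euler, Derivation.leibniz, smul_eq_mul]
  ring

lemma euler_add {R : Type*} [CommRing R] (f g : PowerSeries R) :
    euler (f + g) = euler f + euler g := by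
  simp only [euler, map_add, mul_add]

lemma euler_sub {R : Type*} [CommRing R] (f g : PowerSeries R) :
    euler (f - g) = euler f - euler g := by
  simp only [euler, map_sub, mul_sub]

lemma euler_one {R : Type*} [CommRing R] : euler (1 : PowerSeries R) = 0 := by
  simp [euler]

lemma euler_euler_cube {R : Type*} [CommRing R] (f : PowerSeries R) :
    euler (euler (f ^ 3)) = 3 * f ^ 2 * euler (euler f) + 6 * f * euler f ^ 2 := by
  have h : f ^ 3 = f * f * f := by ring
  simp only [h, euler_mul, euler_add]
  ring

/-- If `U = (1 - A)⁻¹`, then `U⁴ θ²A` is expressed through `U` alone. -/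
lemma pow_four_mul_euler_euler {R : Type*} [CommRing R] {A U : PowerSeries R}
    (h : U * (1 - A) = 1) :
    U ^ 4 * euler (euler A) = U ^ 2 * euler (euler U) - 2 * U * euler U ^ 2 := by
  have h1 : euler U * (1 - A) = U * euler A := by
    have := congrArg euler h
    rw [euler_mul, euler_sub, euler_one] at this
    linear_combination this
  have h2 : euler U = U * U * euler A := by
    linear_combination U * h1 - euler U * h
  have h3 : euler (euler U) =
      (euler U * U + U * euler U) * euler A + U * U * euler (euler A) := by
    rw [← euler_mul, ← euler_mul, ← h2]
  linear_combination (-U ^ 2) * h3 + 2 * U * euler U * h2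

lemma coeff_mul_mul {R : Type*} [CommRing R] (f g h : PowerSeries R) (n : ℕ) :
    coeff n (f * g * h) = ∑ v ∈ Finset.Nat.antidiagonalTuple 3 n,
      coeff (v 0) f * coeff (v 1) g * coeff (v 2) h := by
  simp only [PowerSeries.coeff_mul, Finset.sum_mul]
  rw [Finset.sum_sigma']
  refine Finset.sum_nbij' (fun p => ![p.2.1, p.2.2, p.1.2])
    (fun v => ⟨(v 0 + v 1, v 2), (v 0, v 1)⟩) ?_ ?_ ?_ ?_ ?_
  · rintro ⟨⟨a, b⟩, ⟨c, d⟩⟩ hp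
    have h1 : a + b = n := Finset.HasAntidiagonal.mem_antidiagonal.1 (Finset.mem_sigma.1 hp).1
    have h2 : c + d = a := Finset.HasAntidiagonal.mem_antidiagonal.1 (Finset.mem_sigma.1 hp).2
    simp [Finset.Nat.mem_antidiagonalTuple, Fin.sum_univ_three, h1, h2]
  · intro v hv
    simp only [Finset.Nat.mem_antidiagonalTuple, Fin.sum_univ_three] at hv
    simp [hv]
  · rintro ⟨⟨a, b⟩, ⟨c, d⟩⟩ hp
    obtain rfl : c + d = a := Finset.HasAntidiagonal.mem_antidiagonal.1 (Finset.mem_sigma.1 hp).2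
    simp
  · intro v _
    ext i
    fin_cases i <;> rfl
  · rintro ⟨⟨a, b⟩, ⟨c, d⟩⟩ _
    simp

/-! ### Sums over partitions as power series coefficients -/

/-- Truncated form of `2 (1 - A)⁻³ = ∑ (l + 1)(l + 2) A ^ l`. -/
lemma exists_truncated_inv_cube {R : Type*} [CommRing R] (A : R) (N : ℕ) :
    ∃ Q : R, (1 - A) ^ 3 * ∑ l ∈ Finset.range N, ((l + 1) * (l + 2) : R) * A ^ l
      = 2 + A ^ N * Q := by
  -- The remainder of the twice differentiated geometric sum, cleared of denominators.
  refine ⟨-((N + 1) * (N + 2) - 2 * N * (N + 2) * A + N * (N + 1) * A ^ 2), ?_⟩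
  induction N with
  | zero => simp
  | succ N ih =>
    rw [Finset.sum_range_succ, mul_add, ih]
    push_cast
    ring

/-- The coefficient of `X ^ n` in `A ^ l` as a sum over the partitions of `n` with `l` parts:
`A` may be replaced by its truncation, to which the multinomial theorem applies. -/
lemma coeff_pow_eq_sum_partition {R : Type*} [CommRing R] (a : ℕ → R) (A : PowerSeries R)
    (hA0 : coeff 0 A = 0) (hA : ∀ i, 0 < i → coeff i A = a i) (n l : ℕ) :
    coeff n (A ^ l) = ∑ μ : n.Partition with μ.parts.card = l,
      (μ.parts.countPerms : R) * (μ.parts.map a).prod := by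
  set T : PowerSeries R := ∑ i ∈ Finset.Icc 1 n, PowerSeries.monomial i (a i) with hT
  have hdvd : (PowerSeries.X : PowerSeries R) ^ (n + 1) ∣ A - T := by
    rw [PowerSeries.X_pow_dvd_iff]
    intro m hm
    rw [map_sub, hT, map_sum]
    simp only [PowerSeries.coeff_monomial]
    rcases Nat.eq_zero_or_pos m with rfl | h
    · rw [hA0, Finset.sum_eq_zero, sub_zero]
      intro i hi
      rw [Finset.mem_Icc] at hi
      rw [if_neg (by omega)]
    · rw [Finset.sum_ite_eq, if_pos (by rw [Finset.mem_Icc]; omega), hA m h, sub_self]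
  have h1 : coeff n (A ^ l) = coeff n (T ^ l) := by
    have := PowerSeries.X_pow_dvd_iff.1 (hdvd.trans (sub_dvd_pow_sub_pow A T l)) n (by omega)
    rwa [map_sub, sub_eq_zero] at this
  have hmon : ∀ m : Multiset ℕ,
      (m.map fun i => PowerSeries.monomial i (a i)).prod
        = PowerSeries.monomial m.sum (m.map a).prod := by
    intro m
    induction m using Multiset.induction_on with
    | empty => simp
    | cons i m ih => simp [ih, PowerSeries.monomial_mul_monomial]
  rw [h1, hT, Finset.sum_pow, map_sum]
  have h2 : ∀ k : Sym ℕ l, coeff n ((k.val.countPerms : PowerSeries R) *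
      (k.val.map fun i => PowerSeries.monomial i (a i)).prod)
      = if k.val.sum = n then (k.val.countPerms : R) * (k.val.map a).prod else 0 := by
    intro k
    rw [hmon, ← nsmul_eq_mul, map_nsmul, PowerSeries.coeff_monomial, nsmul_eq_mul]
    simp only [mul_ite, mul_zero, eq_comm]
  rw [Finset.sum_congr rfl fun k _ => h2 k, ← Finset.sum_filter]
  symm
  refine Finset.sum_bij (fun μ hμ => ⟨μ.parts, (Finset.mem_filter.1 hμ).2⟩) ?_ ?_ ?_ ?_
  · intro μ hμ
    refine Finset.mem_filter.2 ⟨Finset.mem_sym_iff.2 fun i hi => ?_, μ.parts_sum⟩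
    have hi' : i ∈ μ.parts := hi
    rw [Finset.mem_Icc]
    exact ⟨μ.parts_pos hi', μ.parts_sum ▸ Multiset.le_sum_of_mem hi'⟩
  · intro μ _ ν _ h
    exact Nat.Partition.ext (congrArg Subtype.val h)
  · intro k hk
    rw [Finset.mem_filter, Finset.mem_sym_iff] at hk
    exact ⟨⟨k.1, fun hi => (Finset.mem_Icc.1 (hk.1 _ hi)).1, hk.2⟩,
      by simp [Finset.mem_filter], rfl⟩
  · intro μ _
    rfl

/-- Summing `(l + 1)(l + 2) A ^ l` over `l` gives `2 (1 - A)⁻³`; the terms with `l > n` do not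
reach degree `n` because `A` has no constant term. -/
lemma sum_partition_eq_coeff_cube {R : Type*} [CommRing R] (a : ℕ → R) (A U : PowerSeries R)
    (hA0 : coeff 0 A = 0) (hA : ∀ i, 0 < i → coeff i A = a i) (hU : U * (1 - A) = 1) (n : ℕ) :
    ∑ μ : n.Partition, ((μ.parts.card + 1) * (μ.parts.card + 2) * μ.parts.countPerms : R) *
      (μ.parts.map a).prod = 2 * coeff n (U ^ 3) := by
  obtain ⟨Q, hQ⟩ := exists_truncated_inv_cube A (n + 1)
  have hcube : U ^ 3 * (1 - A) ^ 3 = 1 := by rw [← mul_pow, hU, one_pow]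
  have hsum : ∑ l ∈ Finset.range (n + 1), ((l + 1) * (l + 2) : PowerSeries R) * A ^ l
      = 2 * U ^ 3 + A ^ (n + 1) * (Q * U ^ 3) := by
    linear_combination U ^ 3 * hQ -
      (∑ l ∈ Finset.range (n + 1), ((l + 1) * (l + 2) : PowerSeries R) * A ^ l) * hcube
  have hX : (PowerSeries.X : PowerSeries R) ∣ A := by
    rw [PowerSeries.X_dvd_iff, ← PowerSeries.coeff_zero_eq_constantCoeff_apply, hA0]
  have hzero : coeff n (A ^ (n + 1) * (Q * U ^ 3)) = 0 :=
    PowerSeries.X_pow_dvd_iff.1 ((pow_dvd_pow_of_dvd hX (n + 1)).mul_right _) n (by omega)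
  have hc := congrArg (coeff n) hsum
  have htwo : (2 : PowerSeries R) * U ^ 3 = (2 : ℕ) • U ^ 3 := by simp [two_mul, two_smul]
  rw [map_add, hzero, add_zero, map_sum, htwo, map_nsmul, nsmul_eq_mul, Nat.cast_ofNat] at hc
  rw [← hc]
  have hcard : ∀ μ ∈ (Finset.univ : Finset n.Partition),
      μ.parts.card ∈ Finset.range (n + 1) := by
    intro μ _
    have h : μ.parts.card • 1 ≤ μ.parts.sum :=
      Multiset.card_nsmul_le_sum fun i hi => μ.parts_pos hi
    rw [μ.parts_sum] at h
    rw [Finset.mem_range]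
    simp at h
    omega
  rw [← Finset.sum_fiberwise_of_maps_to hcard]
  refine Finset.sum_congr rfl fun l _ => ?_
  have hl : ((l + 1) * (l + 2) : PowerSeries R) * A ^ l = ((l + 1) * (l + 2)) • A ^ l := by
    rw [nsmul_eq_mul]; push_cast; rfl
  rw [hl, map_nsmul, coeff_pow_eq_sum_partition a A hA0 hA, nsmul_eq_mul, Finset.mul_sum]
  refine Finset.sum_congr rfl fun μ hμ => ?_
  rw [(Finset.mem_filter.1 hμ).2]
  push_cast
  ring

/-- The version of `sum_partition_eq_coeff_cube` weighted by the second power sum `p₂(μ)`. It is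
the `ε`-component of the unweighted identity over the dual numbers `R[ε]`, for the perturbed
sequence `aᵢ (1 + i² ε)`. -/
lemma sum_partition_sq_eq_coeff {R : Type*} [CommRing R] (a : ℕ → R) (A U : PowerSeries R)
    (hA0 : coeff 0 A = 0) (hA : ∀ i, 0 < i → coeff i A = a i) (hU : U * (1 - A) = 1) (n : ℕ) :
    ∑ μ : n.Partition, ((μ.parts.card + 1) * (μ.parts.card + 2) * μ.parts.countPerms : R) *
      ((((μ.parts.map (· ^ 2)).sum : ℕ) : R) * (μ.parts.map a).prod)
      = 6 * coeff n (U ^ 4 * euler (euler A)) := by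
  set ι : PowerSeries R →+* PowerSeries (DualNumber R) :=
    PowerSeries.map (TrivSqZeroExt.inlHom R R) with hι
  set e : PowerSeries (DualNumber R) := PowerSeries.C DualNumber.eps with he
  have hee : e * e = 0 := by rw [he, ← map_mul, DualNumber.eps_mul_eps, map_zero]
  -- `ι A + e * ι B` perturbs `A`; the inverse of `1 -` it is `ι U + e * ι (U² B)`, since `e² = 0`.
  set B := euler (euler A) with hB
  have hcoeffB : ∀ i, coeff i B = i ^ 2 * coeff i A := by
    intro i
    rw [hB, coeff_euler, coeff_euler]
    ring
  have hιU : ι U * (1 - ι A) = 1 := by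
    rw [← map_one ι, ← map_sub, ← map_mul, hU]
  have key := sum_partition_eq_coeff_cube
    (fun i => (TrivSqZeroExt.inl (a i) + TrivSqZeroExt.inr ((i : R) ^ 2 * a i) : DualNumber R))
    (ι A + e * ι B) (ι U + e * ι (U ^ 2 * B)) ?_ ?_ ?_ n
  · have hcube : (ι U + e * ι (U ^ 2 * B)) ^ 3 = ι (U ^ 3) + e * ι (3 * (U ^ 4 * B)) := by
      simp only [map_mul, map_pow, map_ofNat]
      linear_combination (3 * ι U * (ι U ^ 2 * ι B) ^ 2 + e * (ι U ^ 2 * ι B) ^ 3) * hee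
    have hprod : ∀ m : Multiset ℕ, (m.map fun i =>
        (TrivSqZeroExt.inl (a i) + TrivSqZeroExt.inr ((i : R) ^ 2 * a i) : DualNumber R)).prod
        = TrivSqZeroExt.inl (m.map a).prod
          + TrivSqZeroExt.inr ((((m.map (· ^ 2)).sum : ℕ) : R) * (m.map a).prod) := by
      intro m
      induction m using Multiset.induction_on with
      | empty => simp
      | cons i m ih =>
        rw [Multiset.map_cons, Multiset.prod_cons, ih]
        ext
        · simp
        · simp
          ring
    have hsnd := congrArg TrivSqZeroExt.snd key
    rw [hcube, TrivSqZeroExt.snd_sum] at hsnd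
    have hnat : ∀ k : ℕ, ∀ x : DualNumber R, ((k : DualNumber R) * x).snd = k * x.snd := by
      intro k x
      rw [← nsmul_eq_mul, TrivSqZeroExt.snd_smul, nsmul_eq_mul]
    have hL : ∀ μ : n.Partition,
        (((μ.parts.card + 1) * (μ.parts.card + 2) * μ.parts.countPerms : DualNumber R) *
          (μ.parts.map fun i => (TrivSqZeroExt.inl (a i) +
            TrivSqZeroExt.inr ((i : R) ^ 2 * a i) : DualNumber R)).prod).snd
        = ((μ.parts.card + 1) * (μ.parts.card + 2) * μ.parts.countPerms : R) *
          ((((μ.parts.map (· ^ 2)).sum : ℕ) : R) * (μ.parts.map a).prod) := by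
      intro μ
      have := hnat ((μ.parts.card + 1) * (μ.parts.card + 2) * μ.parts.countPerms)
        (μ.parts.map fun i => (TrivSqZeroExt.inl (a i) +
            TrivSqZeroExt.inr ((i : R) ^ 2 * a i) : DualNumber R)).prod
      push_cast at this
      rw [this, hprod]
      simp
    rw [Finset.sum_congr rfl fun μ _ => hL μ] at hsnd
    rw [hsnd]
    have h2 := hnat 2 (coeff n (ι (U ^ 3) + e * ι (3 * (U ^ 4 * B))))
    rw [Nat.cast_ofNat] at h2
    rw [h2, map_add, he, PowerSeries.coeff_C_mul, hι, PowerSeries.coeff_map, PowerSeries.coeff_map]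
    have h3 : (3 : PowerSeries R) * (U ^ 4 * B) = (3 : ℕ) • (U ^ 4 * B) := by
      rw [nsmul_eq_mul, Nat.cast_ofNat]
    rw [h3, map_nsmul]
    simp
    ring
  · simp [hι, he, hA0, PowerSeries.coeff_C_mul, PowerSeries.coeff_map, hcoeffB,
      -PowerSeries.coeff_zero_eq_constantCoeff]
  · intro i hi
    rw [map_add, he, PowerSeries.coeff_C_mul, hι, PowerSeries.coeff_map, PowerSeries.coeff_map,
      hcoeffB, hA i hi]
    ext <;> simp
  · simp only [map_mul, map_pow]
    linear_combination (1 + e * ι U * ι B) * hιU - (ι U ^ 2 * ι B ^ 2) * hee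

/-- The coefficient `(ℓ + 2)! / ∏ mᵢ!` is `(ℓ + 1)(ℓ + 2)` times the number of distinct
rearrangements of the partition. -/
lemma factorial_div_prod_eq (s : Multiset ℕ) :
    (((s.card + 2).factorial : ℚ) / ∏ i ∈ s.toFinset, ((s.count i).factorial : ℚ))
      = (s.card + 1) * (s.card + 2) * s.countPerms := by
  have hspec := Nat.multinomial_spec s.toFinset (fun i => s.count i)
  rw [Multiset.toFinset_sum_count_eq] at hspec
  have hperm : s.countPerms = Nat.multinomial s.toFinset (fun i => s.count i) := by
    simp [Multiset.countPerms, Finsupp.multinomial, Nat.multinomial, Finsupp.sum, Finsupp.prod]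
  have hne : (∏ i ∈ s.toFinset, ((s.count i).factorial : ℚ)) ≠ 0 :=
    Finset.prod_ne_zero_iff.2 fun i _ => by exact_mod_cast Nat.factorial_ne_zero _
  rw [div_eq_iff hne, hperm, Nat.factorial_succ, Nat.factorial_succ, ← hspec]
  push_cast
  ring

/-! ### Generating functions of `eₙ` and `hₙ` -/

lemma mk_esymm_eq_prod (σ : Type*) [Fintype σ] :
    PowerSeries.mk (esymm σ ℚ) =
      ∏ i : σ, (1 + PowerSeries.monomial 1 (X i : MvPolynomial σ ℚ)) := by
  classical
  ext1 n
  simp only [Finset.prod_one_add, PowerSeries.prod_monomial, map_sum, PowerSeries.coeff_monomial,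
    PowerSeries.coeff_mk, esymm]
  rw [← Finset.sum_filter]
  refine Finset.sum_congr ?_ fun _ _ => rfl
  ext t
  simp [Finset.mem_powersetCard, eq_comm]

lemma mk_hsymm_eq_prod (σ : Type*) [Fintype σ] [DecidableEq σ] :
    PowerSeries.mk (fun n => (-1) ^ n * hsymm σ ℚ n) =
      ∏ i : σ, PowerSeries.mk fun n => (-X i : MvPolynomial σ ℚ) ^ n := by
  ext1 n
  simp only [PowerSeries.coeff_prod, PowerSeries.coeff_mk, hsymm, Finset.mul_sum]
  refine Finset.sum_bij (fun s _ => Multiset.toFinsupp s.1) ?_ ?_ ?_ ?_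
  · intro s _
    rw [Finset.mem_finsuppAntidiag]
    refine ⟨?_, Finset.subset_univ _⟩
    exact (Multiset.sum_count_eq_card fun i _ => Finset.mem_univ i).trans s.2
  · intro s _ t _ h
    exact Subtype.ext (Multiset.toFinsupp.injective h)
  · intro l hl
    rw [Finset.mem_finsuppAntidiag] at hl
    refine ⟨⟨Finsupp.toMultiset l, ?_⟩, Finset.mem_univ _, by simp⟩
    rw [Finsupp.card_toMultiset, Finsupp.sum_fintype _ _ fun _ => rfl]
    exact hl.1
  · rintro ⟨s, hs⟩ _
    have hcount : ∑ i, s.count i = n :=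
      (Multiset.sum_count_eq_card fun i _ => Finset.mem_univ i).trans hs
    have hneg : ∀ i, (-X i : MvPolynomial σ ℚ) ^ s.count i
        = (-1) ^ s.count i * X i ^ s.count i := fun i => neg_pow _ _
    simp only [Multiset.toFinsupp_apply, hneg, Finset.prod_mul_distrib, Finset.prod_pow_eq_pow_sum,
      hcount]
    rw [Finset.prod_multiset_map_count]
    congr 1
    refine Finset.prod_subset (Finset.subset_univ _) fun i _ hi => ?_
    rw [Multiset.count_eq_zero_of_notMem (by simpa using hi), pow_zero]

/-- The classical relation `E(t) H(-t) = 1`. -/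
lemma mk_esymm_mul_mk_hsymm (σ : Type*) [Fintype σ] [DecidableEq σ] :
    PowerSeries.mk (esymm σ ℚ) * PowerSeries.mk (fun n => (-1) ^ n * hsymm σ ℚ n) = 1 := by
  rw [mk_esymm_eq_prod, mk_hsymm_eq_prod, ← Finset.prod_mul_distrib]
  refine Finset.prod_eq_one fun i _ => ?_
  ext1 n
  rw [add_mul, one_mul, map_add, PowerSeries.coeff_mk]
  have hX : PowerSeries.monomial 1 (X i : MvPolynomial σ ℚ)
      = PowerSeries.X * PowerSeries.C (X i) := by
    rw [PowerSeries.X_mul, ← PowerSeries.monomial_zero_eq_C_apply, PowerSeries.X_eq,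
      PowerSeries.monomial_mul_monomial]
    simp
  rw [hX, mul_assoc]
  cases n with
  | zero => simp
  | succ n =>
    rw [PowerSeries.coeff_succ_X_mul, PowerSeries.coeff_C_mul, PowerSeries.coeff_mk,
      PowerSeries.coeff_one, if_neg (Nat.succ_ne_zero n)]
    ring

end KerovTwo

/-- **The `k = 2` case of the abstract C-to-R identity:** for `n ≥ 1`, in any finite number
of variables over `ℚ`, `∑_{ν∈ℕ³, |ν|=n} F₂(ν) e_{ν₁} e_{ν₂} e_{ν₃}
  = ∑_{μ ⊢ n} (−1)^{n−ℓ(μ)} f₂(μ) ((ℓ(μ)+2)!/∏ᵢ mᵢ(μ)!) h_μ`. -/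
theorem F2_esymm_eq_f2_hsymm (n : ℕ) (hn : 1 ≤ n)
    (σ : Type*) [Fintype σ] [DecidableEq σ] :
    ∑ v ∈ Finset.Nat.antidiagonalTuple 3 n,
        F2val ((v 0 : ℚ) + (v 1) + (v 2)) ((v 0 : ℚ) ^ 2 + (v 1) ^ 2 + (v 2) ^ 2) •
          (esymm σ ℚ (v 0) * esymm σ ℚ (v 1) * esymm σ ℚ (v 2)) =
    ∑ μ : n.Partition,
      ((-1 : ℚ) ^ (n - μ.parts.card) *
        f2val (μ.parts.sum : ℚ) (((μ.parts.map (· ^ 2)).sum : ℕ) : ℚ) *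
        (((μ.parts.card + 2).factorial : ℚ) /
          ∏ i ∈ μ.parts.toFinset, ((μ.parts.count i).factorial : ℚ))) •
        hsymmPart σ ℚ μ := by
  classical
  set E : PowerSeries (MvPolynomial σ ℚ) := PowerSeries.mk (esymm σ ℚ) with hE
  set A : PowerSeries (MvPolynomial σ ℚ) :=
    1 - PowerSeries.mk (fun i => (-1) ^ i * hsymm σ ℚ i) with hA
  set a : ℕ → MvPolynomial σ ℚ := fun i => (-1) ^ (i + 1) * hsymm σ ℚ i with ha
  have hU : E * (1 - A) = 1 := by
    rw [hA, sub_sub_cancel]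
    exact KerovTwo.mk_esymm_mul_mk_hsymm σ
  have hA0 : PowerSeries.coeff 0 A = 0 := by
    rw [hA, map_sub, PowerSeries.coeff_mk]
    simp
  have hAi : ∀ i, 0 < i → PowerSeries.coeff i A = a i := by
    intro i hi
    rw [hA, map_sub, PowerSeries.coeff_mk, PowerSeries.coeff_one, if_neg hi.ne']
    ring
  set T₁ := PowerSeries.coeff n (E ^ 3) with hT₁
  set T₂ := PowerSeries.coeff n (3 * E ^ 2 * KerovTwo.euler (KerovTwo.euler E)) with hT₂
  have hS₁ := KerovTwo.sum_partition_eq_coeff_cube a A E hA0 hAi hU n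
  have hS₂ := KerovTwo.sum_partition_sq_eq_coeff a A E hA0 hAi hU n
  -- `θ²(E³) = 3 E² θ²E + 6 E (θE)²` eliminates `E (θE)²` in favour of `T₁` and `T₂`.
  have hS₂' : 6 * PowerSeries.coeff n (E ^ 4 * KerovTwo.euler (KerovTwo.euler A))
      = 4 * T₂ - 2 * ((n : MvPolynomial σ ℚ) ^ 2 * T₁) := by
    have hD : (n : MvPolynomial σ ℚ) ^ 2 * T₁
        = PowerSeries.coeff n (KerovTwo.euler (KerovTwo.euler (E ^ 3))) := by
      rw [KerovTwo.coeff_euler, KerovTwo.coeff_euler]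
      ring
    have h6 : ∀ (k : ℕ) (f : PowerSeries (MvPolynomial σ ℚ)),
        (k : MvPolynomial σ ℚ) * PowerSeries.coeff n f
          = PowerSeries.coeff n ((k : PowerSeries (MvPolynomial σ ℚ)) * f) := by
      intro k f
      rw [← nsmul_eq_mul, ← nsmul_eq_mul, map_nsmul]
    have h6' := h6 6 (E ^ 4 * KerovTwo.euler (KerovTwo.euler A))
    have h4' := h6 4 (3 * E ^ 2 * KerovTwo.euler (KerovTwo.euler E))
    have h2' := h6 2 (KerovTwo.euler (KerovTwo.euler (E ^ 3)))
    rw [Nat.cast_ofNat, Nat.cast_ofNat] at h6' h4' h2'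
    rw [hD, h6', h4', h2', ← map_sub, KerovTwo.euler_euler_cube,
      KerovTwo.pow_four_mul_euler_euler hU]
    congr 1
    ring
  have hL₁ : ∑ v ∈ Finset.Nat.antidiagonalTuple 3 n,
      esymm σ ℚ (v 0) * esymm σ ℚ (v 1) * esymm σ ℚ (v 2) = T₁ := by
    have h3 : E ^ 3 = E * E * E := by ring
    rw [hT₁, h3, KerovTwo.coeff_mul_mul]
    simp only [hE, PowerSeries.coeff_mk]
  have hL₂ : ∑ v ∈ Finset.Nat.antidiagonalTuple 3 n,
      ((v 0 : ℚ) ^ 2 + (v 1) ^ 2 + (v 2) ^ 2) •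
        (esymm σ ℚ (v 0) * esymm σ ℚ (v 1) * esymm σ ℚ (v 2)) = T₂ := by
    have h3 : 3 * E ^ 2 * KerovTwo.euler (KerovTwo.euler E)
        = KerovTwo.euler (KerovTwo.euler E) * E * E + E * KerovTwo.euler (KerovTwo.euler E) * E
          + E * E * KerovTwo.euler (KerovTwo.euler E) := by ring
    rw [hT₂, h3, map_add, map_add, KerovTwo.coeff_mul_mul, KerovTwo.coeff_mul_mul,
      KerovTwo.coeff_mul_mul, ← Finset.sum_add_distrib, ← Finset.sum_add_distrib]
    refine Finset.sum_congr rfl fun v _ => ?_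
    simp only [KerovTwo.coeff_euler, hE, PowerSeries.coeff_mk, smul_eq_C_mul, map_add, map_pow,
      map_natCast]
    ring
  -- On both sides `p₁ = n` is fixed, so the weights are affine in `p₂`.
  have hF : ∀ p : ℚ, F2val n p = (4 * n ^ 2 + 24 * n + 30) / 2880 * p
      + (-n ^ 4 - 4 * n ^ 3 + 5 * n ^ 2 + 18 * n) / 2880 := by
    intro p
    rw [F2val]
    ring
  have hf : ∀ p : ℚ, f2val n p = (2 * n ^ 2 + 12 * n + 15) / 5760 * p
      + (n ^ 4 + 8 * n ^ 3 + 20 * n ^ 2 + 18 * n) / 5760 := by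
    intro p
    rw [f2val]
    ring
  have hLHS : ∀ v ∈ Finset.Nat.antidiagonalTuple 3 n,
      F2val ((v 0 : ℚ) + (v 1) + (v 2)) ((v 0 : ℚ) ^ 2 + (v 1) ^ 2 + (v 2) ^ 2) •
          (esymm σ ℚ (v 0) * esymm σ ℚ (v 1) * esymm σ ℚ (v 2))
      = ((4 * n ^ 2 + 24 * n + 30) / 2880 : ℚ) • ((v 0 : ℚ) ^ 2 + (v 1) ^ 2 + (v 2) ^ 2) •
          (esymm σ ℚ (v 0) * esymm σ ℚ (v 1) * esymm σ ℚ (v 2))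
        + ((-n ^ 4 - 4 * n ^ 3 + 5 * n ^ 2 + 18 * n) / 2880 : ℚ) •
          (esymm σ ℚ (v 0) * esymm σ ℚ (v 1) * esymm σ ℚ (v 2)) := by
    intro v hv
    rw [Finset.Nat.mem_antidiagonalTuple, Fin.sum_univ_three] at hv
    have hv' : (v 0 : ℚ) + v 1 + v 2 = n := by exact_mod_cast hv
    rw [hv', hF, add_smul, mul_smul]
  have hsign : ∀ m : Multiset ℕ, (m.map a).prod
      = (-1) ^ (m.sum + m.card) * (m.map (hsymm σ ℚ)).prod := by
    intro m
    induction m using Multiset.induction_on with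
    | empty => simp
    | cons i m ih =>
      rw [Multiset.map_cons, Multiset.map_cons, Multiset.prod_cons, Multiset.prod_cons,
        Multiset.sum_cons, Multiset.card_cons, ih]
      simp only [ha]
      ring
  have hRHS : ∀ μ : n.Partition,
      ((-1 : ℚ) ^ (n - μ.parts.card) *
        f2val (μ.parts.sum : ℚ) (((μ.parts.map (· ^ 2)).sum : ℕ) : ℚ) *
        (((μ.parts.card + 2).factorial : ℚ) /
          ∏ i ∈ μ.parts.toFinset, ((μ.parts.count i).factorial : ℚ))) • hsymmPart σ ℚ μ
      = ((2 * n ^ 2 + 12 * n + 15) / 5760 : ℚ) •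
          (((μ.parts.card + 1) * (μ.parts.card + 2) * μ.parts.countPerms : MvPolynomial σ ℚ) *
            ((((μ.parts.map (· ^ 2)).sum : ℕ) : MvPolynomial σ ℚ) * (μ.parts.map a).prod))
        + ((n ^ 4 + 8 * n ^ 3 + 20 * n ^ 2 + 18 * n) / 5760 : ℚ) •
          (((μ.parts.card + 1) * (μ.parts.card + 2) * μ.parts.countPerms : MvPolynomial σ ℚ) *
            (μ.parts.map a).prod) := by
    intro μ
    have hcard : μ.parts.card ≤ n := by
      have h : μ.parts.card • 1 ≤ μ.parts.sum :=
        Multiset.card_nsmul_le_sum fun i hi => μ.parts_pos hi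
      rwa [μ.parts_sum, smul_eq_mul, mul_one] at h
    have hpow : (-1 : MvPolynomial σ ℚ) ^ (n + μ.parts.card) = (-1) ^ (n - μ.parts.card) := by
      have h : n + μ.parts.card = (n - μ.parts.card) + 2 * μ.parts.card := by omega
      rw [h, pow_add, pow_mul, neg_one_sq, one_pow, mul_one]
    rw [KerovTwo.factorial_div_prod_eq, hsign, μ.parts_sum, hpow, hf, hsymmPart]
    generalize ((μ.parts.map (· ^ 2)).sum : ℕ) = p
    simp only [smul_eq_C_mul, map_mul, map_add, map_pow, map_neg, map_one, map_natCast, map_ofNat]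
    ring
  rw [Finset.sum_congr rfl hLHS, Finset.sum_congr rfl fun μ _ => hRHS μ, Finset.sum_add_distrib,
    Finset.sum_add_distrib, ← Finset.smul_sum, ← Finset.smul_sum, ← Finset.smul_sum,
    ← Finset.smul_sum, hL₁, hL₂, hS₁, hS₂, hS₂']
  have hn2 : (n : MvPolynomial σ ℚ) ^ 2 * T₁ = ((n : ℚ) ^ 2) • T₁ := by
    rw [smul_eq_C_mul, map_pow, map_natCast]
  have h4 : 4 * T₂ = (4 : ℚ) • T₂ := by rw [smul_eq_C_mul, map_ofNat]
  have h2 : ∀ x : MvPolynomial σ ℚ, 2 * x = (2 : ℚ) • x := fun x => by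
    rw [smul_eq_C_mul, map_ofNat]
  rw [hn2, h4, h2, h2]
  module
end
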